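/- arXiv:1210.7469 — 2 statements merged into one kernel-verified Lean document; each statement's English description precedes it below -/
import Mathlib

section
/- Let Φ be a finite NCIFS with 0 < a₋ := liminf (1/n) log #I^(n) ≤ limsup (1/n) log #I^(n) =: a₊ < ∞ and 0 < b₋ := liminf (1/n) log(1/c̄_n) ≤ limsup (1/n) log(1/c̲_n) =: b₊ < ∞, where c̄_n and c̲_n are the maximal and minimal derivative norms at level n. If additionally Φ satisfies the hypotheses making Bowen's formula hold (e.g. it is weakly balanced), then a₋/b₊ ≤ HD(J(Φ)) ≤ a₊/b₋. -/
open Metric Set Filter Topology MeasureTheory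
open scoped ENNReal

noncomputable section

/-- A non-autonomous conformal iterated function system (NCIFS) on a compact subset `X` of
`ℝ^d`, encoded via the composed maps `wMap m n ω` associated with finite words `ω` occupying
levels `m, m+1, …, n-1`, together with their conformal derivative norms `segN m n ω = ‖Dφ_ω‖`.
The fields record the standing assumptions: the open set condition, bounded distortion with
constant `K` (both for derivative norms of split words and as two-sided Lipschitz bounds),
and uniform contraction with constant `η < 1`. -/
structure NCIFS (d : ℕ) where
  X : Set (EuclideanSpace ℝ (Fin d))
  hX_compact : IsCompact X
  hX_nonempty : X.Nonempty
  hX_regular : closure (interior X) = X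
  hX_convex : Convex ℝ X
  I : ℕ → Type
  hI_ne : ∀ n, Nonempty (I n)
  K : ℝ
  hK : 1 ≤ K
  η : ℝ
  hη_pos : 0 < η
  hη_lt : η < 1
  /-- `segN m n ω` is the derivative norm `‖Dφ_ω‖` of the word `ω` on levels `m, …, n-1`. -/
  segN : (m n : ℕ) → ((j : Finset.Ico m n) → I j) → ℝ
  segN_pos : ∀ m n ω, 0 < segN m n ω
  /-- uniform contraction -/
  segN_contract : ∀ m n ω, segN m n ω ≤ η ^ (n - m)
  /-- submultiplicativity and bounded distortion for derivative norms of split words -/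
  segN_split : ∀ m k n, m ≤ k → k ≤ n →
      ∀ (ω : (j : Finset.Ico m n) → I j) (ω₁ : (j : Finset.Ico m k) → I j)
        (ω₂ : (j : Finset.Ico k n) → I j),
        (∀ (j : ℕ) (h₁ : j ∈ Finset.Ico m k) (h₂ : j ∈ Finset.Ico m n),
            ω₁ ⟨j, h₁⟩ = ω ⟨j, h₂⟩) →
        (∀ (j : ℕ) (h₁ : j ∈ Finset.Ico k n) (h₂ : j ∈ Finset.Ico m n),
            ω₂ ⟨j, h₁⟩ = ω ⟨j, h₂⟩) →
        segN m n ω ≤ segN m k ω₁ * segN k n ω₂ ∧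
          segN m k ω₁ * segN k n ω₂ ≤ K * segN m n ω
  /-- the conformal contraction associated to the word `ω` on levels `m, …, n-1` -/
  wMap : (m n : ℕ) → ((j : Finset.Ico m n) → I j) →
      EuclideanSpace ℝ (Fin d) → EuclideanSpace ℝ (Fin d)
  wMap_id : ∀ m (ω : (j : Finset.Ico m m) → I j) x, wMap m m ω x = x
  wMap_mapsTo : ∀ m n ω, MapsTo (wMap m n ω) X X
  /-- upper conformal bound: `φ_ω` is `‖Dφ_ω‖`-Lipschitz on `X` -/
  wMap_lip : ∀ m n ω, ∀ x ∈ X, ∀ y ∈ X,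
      dist (wMap m n ω x) (wMap m n ω y) ≤ segN m n ω * dist x y
  /-- lower conformal bound (bounded distortion) -/
  wMap_colip : ∀ m n ω, ∀ x ∈ X, ∀ y ∈ X,
      segN m n ω / K * dist x y ≤ dist (wMap m n ω x) (wMap m n ω y)
  /-- compatibility of the maps under splitting of words -/
  wMap_comp : ∀ m k n, m ≤ k → k ≤ n →
      ∀ (ω : (j : Finset.Ico m n) → I j) (ω₁ : (j : Finset.Ico m k) → I j)
        (ω₂ : (j : Finset.Ico k n) → I j),
        (∀ (j : ℕ) (h₁ : j ∈ Finset.Ico m k) (h₂ : j ∈ Finset.Ico m n),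
            ω₁ ⟨j, h₁⟩ = ω ⟨j, h₂⟩) →
        (∀ (j : ℕ) (h₁ : j ∈ Finset.Ico k n) (h₂ : j ∈ Finset.Ico m n),
            ω₂ ⟨j, h₁⟩ = ω ⟨j, h₂⟩) →
        ∀ x ∈ X, wMap m n ω x = wMap m k ω₁ (wMap k n ω₂ x)
  /-- the open set condition -/
  osc : ∀ n (a b : (j : Finset.Ico n (n+1)) → I j), a ≠ b →
      Disjoint (wMap n (n+1) a '' interior X) (wMap n (n+1) b '' interior X)

namespace NCIFS

variable {d : ℕ} (Φ : NCIFS d)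

/-- Words occupying levels `m, …, n-1`. -/
abbrev Word (m n : ℕ) := (j : Finset.Ico m n) → Φ.I j

instance (m n : ℕ) : Nonempty (Φ.Word m n) :=
  ⟨fun j => Classical.choice (Φ.hI_ne j)⟩

/-- The one-letter word at level `n` given by the index `i`. -/
def single (n : ℕ) (i : Φ.I n) : Φ.Word n (n+1) :=
  fun j => cast (congrArg Φ.I (show n = (j : ℕ) by
    have := Finset.mem_Ico.mp j.2; omega)) i

/-- `‖Dφ_i^{(n)}‖`, the derivative norm of the single map with index `i` at level `n`. -/
def Dnorm (n : ℕ) (i : Φ.I n) : ℝ := Φ.segN n (n+1) (Φ.single n i)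

/-- The partition function `Z_n(t) = Σ_{ω ∈ I^n} ‖Dφ_ω‖^t`, valued in `[0,∞]`. -/
def Z (n : ℕ) (t : ℝ) : ℝ≥0∞ := ∑' ω : Φ.Word 0 n, ENNReal.ofReal (Φ.segN 0 n ω ^ t)

/-- The lower pressure `P̲(t) = liminf (1/n) log Z_n(t)`, valued in `[-∞,∞]`. -/
def lowP (t : ℝ) : EReal :=
  liminf (fun n : ℕ => (Φ.Z n t).log * (((n : ℝ)⁻¹ : ℝ) : EReal)) atTop

/-- The upper pressure `P̄(t) = limsup (1/n) log Z_n(t)`. -/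
def upP (t : ℝ) : EReal :=
  limsup (fun n : ℕ => (Φ.Z n t).log * (((n : ℝ)⁻¹ : ℝ) : EReal)) atTop

/-- The Bowen dimension `B(Φ) = sup {t ≥ 0 : P̲(t) > 0}` (and `0` if there is no such `t`). -/
def Bdim : ℝ≥0∞ := ⨆ t : {t : ℝ // 0 ≤ t ∧ (0 : EReal) < Φ.lowP t}, ENNReal.ofReal t.1

/-- The limit set `J(Φ) = ⋂_n ⋃_{ω ∈ I^n} φ_ω(X)`. -/
def limitSet : Set (EuclideanSpace ℝ (Fin d)) :=
  ⋂ n, ⋃ ω : Φ.Word 0 n, Φ.wMap 0 n ω '' Φ.X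

/-- The minimal derivative norm `c̲_n` at level `n`. -/
def cmin (n : ℕ) : ℝ := ⨅ i : Φ.I n, Φ.Dnorm n i

/-- The maximal derivative norm `c̄_n` at level `n`. -/
def cmax (n : ℕ) : ℝ := ⨆ i : Φ.I n, Φ.Dnorm n i

/-- `ρ_n`, the maximal ratio of derivative norms at level `n`. -/
def ρ (n : ℕ) : ℝ := Φ.cmax n / Φ.cmin n

/-- The modified partition function
`Z̃_n(t) = Z_{n-1}(t) · (#I^{(n)})^{t/d} · c̲_n^t`. -/
def Zt (n : ℕ) (t : ℝ) : ℝ≥0∞ :=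
  Φ.Z (n - 1) t * ENNReal.ofReal ((Nat.card (Φ.I n) : ℝ) ^ (t / (d : ℝ)) * Φ.cmin n ^ t)

/-- `P̃(t) = liminf (1/n) log Z̃_n(t)`. -/
def tP (t : ℝ) : EReal :=
  liminf (fun n : ℕ => (Φ.Zt n t).log * (((n : ℝ)⁻¹ : ℝ) : EReal)) atTop

end NCIFS

/-!
Upper bound: the `n`-th level cylinders cover the limit set, and `#I^n · (c̄_0 ⋯ c̄_{n-1})^t` is a
product whose factors `#I^(j) · c̄_j^t` decay exponentially as soon as `t > a₊ / b₋`.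

Lower bound: let the letters of an infinite word be independent and uniform, and push their law to
the limit set. Given a radius `r`, take the last level `k` at which all cylinders still have
derivative norm at least `r`. Since the cylinders are essentially disjoint images of the convex set
`X`, each of those meeting a ball `B(x, r)` contains a set of volume comparable to `r^d` near the
ball, so their number is bounded and the ball has mass at most a constant times `1 / #I^k`.
Compared with `r^s` this loses one level, which is harmless: `log #I^k` and the logarithm of the
smallest derivative norm are sums of terms of linear size, so they grow quadratically in `k`, and
`s < a₋ / b₊` leaves a margin that grows quadratically too. The same margin absorbs the distortion
factor `K^k`.
-/

open scoped NNReal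

theorem le_hausdorffMeasure_of_closedBall_le {E : Type*} [MetricSpace E] [MeasurableSpace E]
    [BorelSpace E] {ν : OuterMeasure E} {s : ℝ}
    (h : ∀ᶠ r in 𝓝[>] (0 : ℝ), ∀ x, ν (closedBall x r) ≤ ENNReal.ofReal r ^ s) (A : Set E) :
    ν A ≤ μH[s] A := by
  obtain ⟨r₀, hr₀, hball⟩ := mem_nhdsGT_iff_exists_Ioo_subset.mp h
  have hhalf : 0 < ENNReal.ofReal (r₀ / 2) := ENNReal.ofReal_pos.mpr (half_pos hr₀)
  suffices hle : ν ≤ OuterMeasure.mkMetric (· ^ s) from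
    (hle A).trans_eq (congrFun (OuterMeasure.coe_mkMetric _) A)
  refine OuterMeasure.le_mkMetric _ ν _ hhalf fun S hS => ?_
  rcases S.eq_empty_or_nonempty with rfl | ⟨x, hx⟩
  · simp
  have hfin : ediam S ≠ ⊤ := ne_top_of_le_ne_top ENNReal.ofReal_ne_top hS
  set δ := (ediam S).toReal
  have hδr₀ : δ < r₀ :=
    (ENNReal.toReal_le_of_le_ofReal (half_pos hr₀).le hS).trans_lt (half_lt_self hr₀)
  have hlim : Tendsto (fun r => ENNReal.ofReal r ^ s) (𝓝[>] δ) (𝓝 (ediam S ^ s)) := by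
    rw [← ENNReal.ofReal_toReal hfin]
    exact ((ENNReal.continuous_rpow_const.comp ENNReal.continuous_ofReal).tendsto δ).mono_left
      nhdsWithin_le_nhds
  refine ge_of_tendsto hlim ?_
  filter_upwards [Ioo_mem_nhdsGT hδr₀] with r hr
  have hSr : S ⊆ closedBall x r := fun y hy =>
    (dist_le_diam_of_mem' hfin hy hx).trans hr.1.le
  exact (measure_mono hSr).trans (hball ⟨ENNReal.toReal_nonneg.trans_lt hr.1, hr.2⟩ x)

theorem hausdorffMeasure_le_of_expandsOn {E F : Type*} [MetricSpace E] [MeasurableSpace E]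
    [BorelSpace E] [MetricSpace F] [MeasurableSpace F] [BorelSpace F] {f : E → F} {A : Set E}
    {K : ℝ≥0} {s : ℝ} (hs : 0 ≤ s)
    (hf : ∀ x ∈ A, ∀ y ∈ A, dist x y ≤ K * dist (f x) (f y)) :
    μH[s] A ≤ (K : ℝ≥0∞) ^ s * μH[s] (f '' A) := by
  have hanti : AntilipschitzWith K (fun x : A => f x) :=
    AntilipschitzWith.of_le_mul_dist fun x y => hf x x.2 y y.2
  have hle := hanti.le_hausdorffMeasure_image hs univ
  rwa [← isometry_subtype_coe.hausdorffMeasure_image (Or.inl hs), image_univ,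
    Subtype.range_coe, image_univ, ← image_eq_range] at hle

theorem exists_lt_le_of_tendsto_zero {f : ℕ → ℝ} (hf : Tendsto f atTop (𝓝 0)) {k₀ : ℕ} {r : ℝ}
    (hr : 0 < r) (hk₀ : r ≤ f k₀) : ∃ k ≥ k₀, f (k + 1) < r ∧ r ≤ f k := by
  by_contra! hcon
  have hge : ∀ k ≥ k₀, r ≤ f k := fun k hk =>
    Nat.le_induction hk₀ (fun k hk hrk => not_lt.mp fun hlt => (hcon k hk hlt).not_ge hrk) k hk
  exact hr.not_ge (ge_of_tendsto hf (eventually_atTop.mpr ⟨k₀, hge⟩))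

theorem tendsto_prod_range_zero {f : ℕ → ℝ} (hpos : ∀ n, 0 < f n)
    (hf : Tendsto f atTop (𝓝 0)) :
    Tendsto (fun n => ∏ j ∈ Finset.range n, f j) atTop (𝓝 0) := by
  have hne : ∀ n, ∏ j ∈ Finset.range n, f j ≠ 0 :=
    fun n => Finset.prod_ne_zero_iff.mpr fun j _ => (hpos j).ne'
  refine (summable_of_ratio_test_tendsto_lt_one zero_lt_one
    (Eventually.of_forall hne) (hf.congr fun n => ?_)).tendsto_atTop_zero
  rw [← norm_div, Finset.prod_range_succ, mul_div_cancel_left₀ _ (hne n),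
    Real.norm_of_nonneg (hpos n).le]

theorem tendsto_prod_range_atTop {f : ℕ → ℝ} (hpos : ∀ n, 0 < f n)
    (hf : Tendsto f atTop atTop) :
    Tendsto (fun n => ∏ j ∈ Finset.range n, f j) atTop atTop := by
  have hinv : Tendsto (fun n => (∏ j ∈ Finset.range n, f j)⁻¹) atTop (𝓝 0) := by
    simp only [← Finset.prod_inv_distrib]
    exact tendsto_prod_range_zero (fun n => inv_pos.mpr (hpos n)) hf.inv_tendsto_atTop
  have hinv_pos : ∀ n, 0 < (∏ j ∈ Finset.range n, f j)⁻¹ := fun n =>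
    inv_pos.mpr (Finset.prod_pos fun j _ => hpos j)
  exact (tendsto_nhdsWithin_of_tendsto_nhds_of_eventually_within _ hinv
    (Eventually.of_forall hinv_pos)).inv_tendsto_nhdsGT_zero.congr fun n => inv_inv _

theorem eventually_le_mul_of_limsup_div_lt {u : ℕ → ℝ} {a : ℝ}
    (hbdd : IsBoundedUnder (· ≤ ·) atTop fun n : ℕ => u n / n)
    (ha : limsup (fun n : ℕ => u n / n) atTop < a) : ∀ᶠ n : ℕ in atTop, u n ≤ a * n := by
  filter_upwards [eventually_lt_of_limsup_lt ha hbdd, eventually_gt_atTop 0] with n hn hn0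
  exact ((div_lt_iff₀ (Nat.cast_pos.mpr hn0)).mp hn).le

theorem eventually_mul_le_of_lt_liminf_div {u : ℕ → ℝ} {a : ℝ}
    (hbdd : IsBoundedUnder (· ≥ ·) atTop fun n : ℕ => u n / n)
    (ha : a < liminf (fun n : ℕ => u n / n) atTop) : ∀ᶠ n : ℕ in atTop, a * n ≤ u n := by
  filter_upwards [eventually_lt_of_lt_liminf ha hbdd, eventually_gt_atTop 0] with n hn hn0
  exact ((lt_div_iff₀ (Nat.cast_pos.mpr hn0)).mp hn).le

theorem tendsto_atTop_of_mul_sub_le {u : ℕ → ℝ} {c C : ℝ} (hc : 0 < c)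
    (hu : ∀ᶠ n : ℕ in atTop, c * n - C ≤ u n) : Tendsto u atTop atTop :=
  tendsto_atTop_mono' atTop hu <| tendsto_atTop_add_const_right _ (-C) <|
    tendsto_natCast_atTop_atTop.const_mul_atTop hc

theorem tendsto_mul_sub_atTop_of_limsup_div_lt {u v : ℕ → ℝ} {t : ℝ} (ht : 0 ≤ t)
    (hu : IsBoundedUnder (· ≤ ·) atTop fun n : ℕ => u n / n)
    (hv : IsBoundedUnder (· ≥ ·) atTop fun n : ℕ => v n / n)
    (h : limsup (fun n : ℕ => u n / n) atTop < t * liminf (fun n : ℕ => v n / n) atTop) :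
    Tendsto (fun n => t * v n - u n) atTop atTop := by
  obtain ⟨b, hb, htb⟩ := (((continuous_const_mul t).tendsto _).eventually_const_lt h).exists_lt
  obtain ⟨a, ha, hatb⟩ := exists_between htb
  refine tendsto_atTop_of_mul_sub_le (c := t * b - a) (C := 0) (sub_pos.mpr hatb) ?_
  filter_upwards [eventually_le_mul_of_limsup_div_lt hu ha,
    eventually_mul_le_of_lt_liminf_div hv hb] with n hun hvn
  linarith [mul_le_mul_of_nonneg_left hvn ht]

theorem tendsto_sub_mul_succ_atTop_of_limsup_div_lt {u v : ℕ → ℝ} {s : ℝ} (hs : 0 ≤ s)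
    (hu : IsBoundedUnder (· ≥ ·) atTop fun n : ℕ => u n / n)
    (hv : IsBoundedUnder (· ≤ ·) atTop fun n : ℕ => v n / n)
    (h : s * limsup (fun n : ℕ => v n / n) atTop < liminf (fun n : ℕ => u n / n) atTop) :
    Tendsto (fun n => u n - s * v (n + 1)) atTop atTop := by
  obtain ⟨b, hb, hsb⟩ := (((continuous_const_mul s).tendsto _).eventually_lt_const h).exists_gt
  obtain ⟨a, hsba, ha⟩ := exists_between hsb
  refine tendsto_atTop_of_mul_sub_le (c := a - s * b) (C := s * b) (sub_pos.mpr hsba) ?_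
  filter_upwards [eventually_mul_le_of_lt_liminf_div hu ha,
    (tendsto_add_atTop_nat 1).eventually (eventually_le_mul_of_limsup_div_lt hv hb)]
    with n hun hvn
  push_cast at hvn
  linarith [mul_le_mul_of_nonneg_left hvn hs]

namespace NCIFS

variable {d : ℕ} (Φ : NCIFS d)

instance (n : ℕ) : Nonempty (Φ.I n) := Φ.hI_ne n

/-- The finite word that the infinite word `σ` spells on the levels `m, …, n-1`. -/
abbrev seg (σ : (n : ℕ) → Φ.I n) (m n : ℕ) : Φ.Word m n := (Finset.Ico m n).restrict σ

/-- The cylinder `φ_ω(X)` of a finite word `ω`. -/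
def cylinder (m n : ℕ) (ω : Φ.Word m n) : Set (EuclideanSpace ℝ (Fin d)) := Φ.wMap m n ω '' Φ.X

theorem seg_surjective (m n : ℕ) : Function.Surjective (Φ.seg · m n) := fun ω =>
  ⟨fun j => if hj : j ∈ Finset.Ico m n then ω ⟨j, hj⟩ else Classical.arbitrary _,
    funext fun j => dif_pos j.2⟩

theorem seg_succ_eq_single (σ : (n : ℕ) → Φ.I n) (n : ℕ) :
    Φ.seg σ n (n + 1) = Φ.single n (σ n) := by
  funext ⟨j, hj⟩
  obtain rfl : j = n := by rw [Finset.mem_Ico] at hj; omega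
  rfl

theorem K_pos : 0 < Φ.K := one_pos.trans_le Φ.hK

theorem isClosed_X : IsClosed Φ.X := Φ.hX_compact.isClosed

theorem lipschitzOnWith_wMap {m n : ℕ} (ω : Φ.Word m n) :
    LipschitzOnWith (Φ.segN m n ω).toNNReal (Φ.wMap m n ω) Φ.X :=
  .of_dist_le_mul fun x hx y hy => by
    rw [Real.coe_toNNReal _ (Φ.segN_pos m n ω).le]
    exact Φ.wMap_lip m n ω x hx y hy

theorem injOn_wMap {m n : ℕ} (ω : Φ.Word m n) : InjOn (Φ.wMap m n ω) Φ.X := by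
  intro x hx y hy hxy
  have hle := Φ.wMap_colip m n ω x hx y hy
  rw [hxy, dist_self] at hle
  have hpos : 0 < Φ.segN m n ω / Φ.K := div_pos (Φ.segN_pos m n ω) Φ.K_pos
  exact dist_le_zero.mp (nonpos_of_mul_nonpos_right hle hpos)

theorem isCompact_cylinder {m n : ℕ} (ω : Φ.Word m n) : IsCompact (Φ.cylinder m n ω) :=
  Φ.hX_compact.image_of_continuousOn (Φ.lipschitzOnWith_wMap ω).continuousOn

theorem cylinder_subset_X {m n : ℕ} (ω : Φ.Word m n) : Φ.cylinder m n ω ⊆ Φ.X :=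
  (Φ.wMap_mapsTo m n ω).image_subset

theorem cylinder_seg_eq_image (σ : (n : ℕ) → Φ.I n) {m k n : ℕ} (hmk : m ≤ k) (hkn : k ≤ n) :
    Φ.cylinder m n (Φ.seg σ m n) = Φ.wMap m k (Φ.seg σ m k) '' Φ.cylinder k n (Φ.seg σ k n) := by
  rw [cylinder, cylinder, image_image]
  exact image_congr fun x hx =>
    Φ.wMap_comp m k n hmk hkn _ _ _ (fun _ _ _ => rfl) (fun _ _ _ => rfl) x hx

theorem cylinder_seg_subset (σ : (n : ℕ) → Φ.I n) {m k n : ℕ} (hmk : m ≤ k) (hkn : k ≤ n) :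
    Φ.cylinder m n (Φ.seg σ m n) ⊆ Φ.cylinder m k (Φ.seg σ m k) := by
  rw [Φ.cylinder_seg_eq_image σ hmk hkn]
  exact image_mono (Φ.cylinder_subset_X _)

theorem dist_le_of_mem_cylinder {m n : ℕ} {ω : Φ.Word m n} {x y : EuclideanSpace ℝ (Fin d)}
    (hx : x ∈ Φ.cylinder m n ω) (hy : y ∈ Φ.cylinder m n ω) :
    dist x y ≤ diam Φ.X * Φ.segN m n ω := by
  obtain ⟨x, hx, rfl⟩ := hx
  obtain ⟨y, hy, rfl⟩ := hy
  rw [mul_comm]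
  exact (Φ.wMap_lip m n ω x hx y hy).trans <| mul_le_mul_of_nonneg_left
    (dist_le_diam_of_mem Φ.hX_compact.isBounded hx hy) (Φ.segN_pos m n ω).le

section Volume

instance : (μH[d] : Measure (EuclideanSpace ℝ (Fin d))).IsAddHaarMeasure := by
  simpa only [finrank_euclideanSpace_fin] using
    isAddHaarMeasure_hausdorffMeasure (E := EuclideanSpace ℝ (Fin d))

theorem hausdorffMeasure_X_pos : 0 < μH[d] Φ.X := by
  have hne : (interior Φ.X).Nonempty := by
    rw [← closure_nonempty_iff, Φ.hX_regular]
    exact Φ.hX_nonempty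
  exact (isOpen_interior.measure_pos μH[d] hne).trans_le (measure_mono interior_subset)

theorem hausdorffMeasure_wMap_image_eq_zero {m n : ℕ} (ω : Φ.Word m n)
    {A : Set (EuclideanSpace ℝ (Fin d))} (hA : A ⊆ Φ.X) (h0 : μH[d] A = 0) :
    μH[d] (Φ.wMap m n ω '' A) = 0 := by
  have hle := ((Φ.lipschitzOnWith_wMap ω).mono hA).hausdorffMeasure_image_le (Nat.cast_nonneg d)
  rwa [h0, mul_zero, nonpos_iff_eq_zero] at hle

theorem aedisjoint_cylinder_succ {n : ℕ} {a b : Φ.Word n (n + 1)} (hab : a ≠ b) :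
    AEDisjoint μH[d] (Φ.cylinder n (n + 1) a) (Φ.cylinder n (n + 1) b) := by
  have hnull : ∀ ω : Φ.Word n (n + 1), μH[d] (Φ.wMap n (n + 1) ω '' frontier Φ.X) = 0 := fun ω =>
    Φ.hausdorffMeasure_wMap_image_eq_zero ω Φ.isClosed_X.frontier_subset
      (Φ.hX_convex.addHaar_frontier μH[d])
  have hsplit : ∀ ω : Φ.Word n (n + 1), Φ.cylinder n (n + 1) ω =
      Φ.wMap n (n + 1) ω '' interior Φ.X ∪ Φ.wMap n (n + 1) ω '' frontier Φ.X := fun ω => by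
    rw [← image_union, ← closure_eq_interior_union_frontier, Φ.isClosed_X.closure_eq, cylinder]
  rw [hsplit a, hsplit b]
  exact ((Φ.osc n a b hab).aedisjoint.union_right (.of_null_right (hnull b))).union_left
    (.of_null_left (hnull a))

theorem aedisjoint_cylinder_seg {σ τ : (n : ℕ) → Φ.I n} {n : ℕ}
    (hne : Φ.seg σ 0 n ≠ Φ.seg τ 0 n) :
    AEDisjoint μH[d] (Φ.cylinder 0 n (Φ.seg σ 0 n)) (Φ.cylinder 0 n (Φ.seg τ 0 n)) := by
  induction n with
  | zero => exact absurd (funext fun j => absurd j.2 (by simp)) hne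
  | succ n ih =>
    by_cases hinit : Φ.seg σ 0 n = Φ.seg τ 0 n
    · have hlast : Φ.seg σ n (n + 1) ≠ Φ.seg τ n (n + 1) := fun heq => hne <| by
        funext ⟨j, hj⟩
        rcases (Nat.lt_succ_iff_lt_or_eq.mp (Finset.mem_Ico.mp hj).2) with hjn | rfl
        · exact congrFun hinit ⟨j, Finset.mem_Ico.mpr ⟨j.zero_le, hjn⟩⟩
        · exact congrFun heq ⟨j, by simp⟩
      rw [Φ.cylinder_seg_eq_image σ n.zero_le n.le_succ,
        Φ.cylinder_seg_eq_image τ n.zero_le n.le_succ, ← hinit, AEDisjoint,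
        ← (Φ.injOn_wMap _).image_inter (Φ.cylinder_subset_X _) (Φ.cylinder_subset_X _)]
      exact Φ.hausdorffMeasure_wMap_image_eq_zero _
        (inter_subset_left.trans (Φ.cylinder_subset_X _)) (Φ.aedisjoint_cylinder_succ hlast)
    · exact (ih hinit).mono (Φ.cylinder_seg_subset σ n.zero_le n.le_succ)
        (Φ.cylinder_seg_subset τ n.zero_le n.le_succ)

theorem pairwise_aedisjoint_cylinder (n : ℕ) :
    Pairwise (Function.onFun (AEDisjoint μH[d]) (Φ.cylinder 0 n)) := by
  intro ω τ hne
  obtain ⟨σ, rfl⟩ := Φ.seg_surjective 0 n ω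
  obtain ⟨ξ, rfl⟩ := Φ.seg_surjective 0 n τ
  exact Φ.aedisjoint_cylinder_seg hne

theorem hausdorffMeasure_le_wMap_image {m n : ℕ} (ω : Φ.Word m n)
    {A : Set (EuclideanSpace ℝ (Fin d))} (hA : A ⊆ Φ.X) :
    μH[d] A ≤ ENNReal.ofReal (Φ.K / Φ.segN m n ω) ^ d * μH[d] (Φ.wMap m n ω '' A) := by
  have hN := Φ.segN_pos m n ω
  have hK := Φ.K_pos
  have hle := hausdorffMeasure_le_of_expandsOn (f := Φ.wMap m n ω) (A := A)
    (K := (Φ.K / Φ.segN m n ω).toNNReal) (Nat.cast_nonneg d) fun x hx y hy => ?_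
  · rwa [ENNReal.rpow_natCast] at hle
  rw [Real.coe_toNNReal _ (by positivity)]
  calc dist x y = Φ.K / Φ.segN m n ω * (Φ.segN m n ω / Φ.K * dist x y) := by field_simp
    _ ≤ _ := by gcongr; exact Φ.wMap_colip m n ω x (hA hx) y (hA hy)

theorem image_homothety_subset_X {z : EuclideanSpace ℝ (Fin d)} (hz : z ∈ Φ.X) {t : ℝ}
    (ht : t ∈ Icc 0 1) : AffineMap.homothety z t '' Φ.X ⊆ Φ.X := by
  rintro _ ⟨x, hx, rfl⟩
  rw [AffineMap.homothety_eq_lineMap]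
  exact Φ.hX_convex.lineMap_mem hz hx ht

theorem wMap_image_homothety_subset {m n : ℕ} (ω : Φ.Word m n)
    {z : EuclideanSpace ℝ (Fin d)} (hz : z ∈ Φ.X) {t : ℝ} (ht : t ∈ Icc 0 1) :
    Φ.wMap m n ω '' (AffineMap.homothety z t '' Φ.X) ⊆ Φ.cylinder m n ω ∩
      closedBall (Φ.wMap m n ω z) (diam Φ.X * (Φ.segN m n ω * t)) := by
  refine subset_inter (image_mono (Φ.image_homothety_subset_X hz ht)) ?_
  rintro _ ⟨_, ⟨x, hx, rfl⟩, rfl⟩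
  calc dist (Φ.wMap m n ω (AffineMap.homothety z t x)) (Φ.wMap m n ω z)
      ≤ Φ.segN m n ω * dist (AffineMap.homothety z t x) z :=
        Φ.wMap_lip m n ω _ (Φ.image_homothety_subset_X hz ht (mem_image_of_mem _ hx)) z hz
    _ = dist z x * (Φ.segN m n ω * t) := by
        rw [dist_homothety_center, Real.norm_of_nonneg ht.1]; ring
    _ ≤ diam Φ.X * (Φ.segN m n ω * t) := by
        have hN := Φ.segN_pos m n ω
        have ht0 := ht.1
        gcongr
        exact dist_le_diam_of_mem Φ.hX_compact.isBounded hz hx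

-- Convexity lets us shrink `X` towards the preimage of `y` by the factor `r / ‖Dφ_ω‖`; `φ_ω` maps
-- the shrunken copy to a set of size comparable to `r` around `y`.
theorem hausdorffMeasure_X_le_cylinder_inter_closedBall {m n : ℕ} {ω : Φ.Word m n} {r : ℝ}
    (hr : 0 < r) (hrω : r ≤ Φ.segN m n ω) {y : EuclideanSpace ℝ (Fin d)}
    (hy : y ∈ Φ.cylinder m n ω) :
    μH[d] Φ.X ≤ ENNReal.ofReal (Φ.K / r) ^ d *
      μH[d] (Φ.cylinder m n ω ∩ closedBall y (diam Φ.X * r)) := by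
  obtain ⟨z, hz, rfl⟩ := hy
  have hN := Φ.segN_pos m n ω
  set N := Φ.segN m n ω
  have ht : r / N ∈ Icc (0 : ℝ) 1 := ⟨by positivity, (div_le_one hN).mpr hrω⟩
  have hsub := Φ.wMap_image_homothety_subset ω hz ht
  rw [mul_div_cancel₀ r hN.ne'] at hsub
  calc μH[d] Φ.X
      = ENNReal.ofReal (N / r) ^ d * μH[d] (AffineMap.homothety z (r / N) '' Φ.X) := by
        rw [Measure.addHaar_image_homothety, finrank_euclideanSpace_fin,
          abs_of_nonneg (by positivity), ENNReal.ofReal_pow ht.1, ← mul_assoc, ← mul_pow,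
          ← ENNReal.ofReal_mul (by positivity), div_mul_div_cancel₀ hr.ne', div_self hN.ne',
          ENNReal.ofReal_one, one_pow, one_mul]
    _ ≤ ENNReal.ofReal (N / r) ^ d * (ENNReal.ofReal (Φ.K / N) ^ d *
          μH[d] (Φ.wMap m n ω '' (AffineMap.homothety z (r / N) '' Φ.X))) := by
        gcongr
        exact Φ.hausdorffMeasure_le_wMap_image ω (Φ.image_homothety_subset_X hz ht)
    _ = ENNReal.ofReal (Φ.K / r) ^ d *
          μH[d] (Φ.wMap m n ω '' (AffineMap.homothety z (r / N) '' Φ.X)) := by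
        rw [← mul_assoc, ← mul_pow, ← ENNReal.ofReal_mul (by positivity), mul_comm (N / r),
          div_mul_div_cancel₀ hN.ne']
    _ ≤ _ := by gcongr

/-- The bound that comparison of volumes gives for the number of essentially disjoint cylinders,
all with derivative norm at least `r`, that meet a ball of radius `r`. -/
def overlapBound : ℝ≥0∞ :=
  ENNReal.ofReal (Φ.K * (1 + diam Φ.X)) ^ d *
    μH[d] (closedBall (0 : EuclideanSpace ℝ (Fin d)) 1) / μH[d] Φ.X

theorem overlapBound_ne_top : Φ.overlapBound ≠ ⊤ :=
  ENNReal.div_ne_top (ENNReal.mul_ne_top (ENNReal.pow_ne_top ENNReal.ofReal_ne_top)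
    (isCompact_closedBall _ _).measure_lt_top.ne) Φ.hausdorffMeasure_X_pos.ne'

theorem card_le_overlapBound {n : ℕ} {r : ℝ} (hr : 0 < r) {x : EuclideanSpace ℝ (Fin d)}
    {W : Finset (Φ.Word 0 n)} (hsize : ∀ ω ∈ W, r ≤ Φ.segN 0 n ω)
    (hmeet : ∀ ω ∈ W, (Φ.cylinder 0 n ω ∩ closedBall x r).Nonempty) :
    (W.card : ℝ≥0∞) ≤ Φ.overlapBound := by
  choose! y hyω hyx using hmeet
  have hK := Φ.K_pos
  let A (ω : Φ.Word 0 n) := Φ.cylinder 0 n ω ∩ closedBall (y ω) (diam Φ.X * r)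
  have hvol : ∑ ω ∈ W, μH[d] (A ω) ≤ μH[d] (closedBall x ((1 + diam Φ.X) * r)) := by
    rw [← measure_biUnion_finset₀
      (fun ω _ τ _ hne => (Φ.pairwise_aedisjoint_cylinder n hne).mono inter_subset_left
        inter_subset_left)
      fun ω _ => ((Φ.isCompact_cylinder ω).isClosed.inter
        isClosed_closedBall).measurableSet.nullMeasurableSet]
    refine measure_mono (iUnion₂_subset fun ω hω => inter_subset_right.trans ?_)
    refine closedBall_subset_closedBall' ?_
    linarith [mem_closedBall.mp (hyx ω hω)]
  rw [overlapBound, ENNReal.le_div_iff_mul_le (.inl Φ.hausdorffMeasure_X_pos.ne')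
    (.inl Φ.hX_compact.measure_lt_top.ne)]
  calc (W.card : ℝ≥0∞) * μH[d] Φ.X = ∑ ω ∈ W, μH[d] Φ.X := by
        rw [Finset.sum_const, nsmul_eq_mul]
    _ ≤ ∑ ω ∈ W, ENNReal.ofReal (Φ.K / r) ^ d * μH[d] (A ω) :=
        Finset.sum_le_sum fun ω hω =>
          Φ.hausdorffMeasure_X_le_cylinder_inter_closedBall hr (hsize ω hω) (hyω ω hω)
    _ ≤ ENNReal.ofReal (Φ.K / r) ^ d * μH[d] (closedBall x ((1 + diam Φ.X) * r)) := by
        rw [← Finset.mul_sum]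
        gcongr
    _ = ENNReal.ofReal (Φ.K * (1 + diam Φ.X)) ^ d *
          μH[d] (closedBall (0 : EuclideanSpace ℝ (Fin d)) 1) := by
        rw [Measure.addHaar_closedBall' _ x (by positivity), finrank_euclideanSpace_fin,
          ENNReal.ofReal_pow (by positivity), ← mul_assoc, ← mul_pow,
          ← ENNReal.ofReal_mul (by positivity)]
        congr 3
        field_simp

end Volume

section Coding

theorem nonempty_iInter_cylinder_seg (σ : (n : ℕ) → Φ.I n) :
    (⋂ n, Φ.cylinder 0 n (Φ.seg σ 0 n)).Nonempty :=
  IsCompact.nonempty_iInter_of_sequence_nonempty_isCompact_isClosed _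
    (fun n => Φ.cylinder_seg_subset σ n.zero_le n.le_succ)
    (fun _ => Φ.hX_nonempty.image _) (Φ.isCompact_cylinder _)
    (fun _ => (Φ.isCompact_cylinder _).isClosed)

/-- The coding map, which sends an infinite word to the point that lies in all cylinders of its
initial segments. -/
def code (σ : (n : ℕ) → Φ.I n) : EuclideanSpace ℝ (Fin d) :=
  (Φ.nonempty_iInter_cylinder_seg σ).some

theorem code_mem_cylinder (σ : (n : ℕ) → Φ.I n) (n : ℕ) :
    Φ.code σ ∈ Φ.cylinder 0 n (Φ.seg σ 0 n) :=
  mem_iInter.mp (Φ.nonempty_iInter_cylinder_seg σ).some_mem n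

theorem code_mem_limitSet (σ : (n : ℕ) → Φ.I n) : Φ.code σ ∈ Φ.limitSet :=
  mem_iInter.mpr fun n => mem_iUnion.mpr ⟨_, Φ.code_mem_cylinder σ n⟩

end Coding

section UniformMass

variable [∀ n, Finite (Φ.I n)]

local instance (n : ℕ) : MeasurableSpace (Φ.I n) := ⊤

local instance (n : ℕ) : DiscreteMeasurableSpace (Φ.I n) := ⟨fun _ => trivial⟩

/-- The law of an infinite word whose letters are independent and uniformly distributed. -/
def wordMeasure : Measure ((n : ℕ) → Φ.I n) :=
  Measure.infinitePi fun n => ProbabilityTheory.uniformOn (univ : Set (Φ.I n))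

theorem wordMeasure_seg_eq (m n : ℕ) (ω : Φ.Word m n) :
    Φ.wordMeasure {σ | Φ.seg σ m n = ω} = (Nat.card (Φ.Word m n) : ℝ≥0∞)⁻¹ := by
  have := fun n => Fintype.ofFinite (Φ.I n)
  change Φ.wordMeasure ((Finset.Ico m n).restrict ⁻¹' {ω}) = _
  rw [wordMeasure, ← Measure.map_apply (by fun_prop) (measurableSet_singleton ω),
    Measure.infinitePi_map_restrict, Measure.pi_singleton, Nat.card_pi, Nat.cast_prod,
    ENNReal.prod_inv_distrib]
  · refine Finset.prod_congr rfl fun j _ => ?_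
    rw [ProbabilityTheory.uniformOn_univ, Measure.count_singleton, one_div,
      Nat.card_eq_fintype_card]
  · exact fun _ _ _ _ _ => .inr (ENNReal.natCast_ne_top _)

/-- The distribution of mass on the limit set that gives each cylinder of a level the same share:
the image of `wordMeasure` under the coding map. As an outer measure it exists without any
measurability of the coding map. -/
def uniformMass : OuterMeasure (EuclideanSpace ℝ (Fin d)) :=
  OuterMeasure.map Φ.code Φ.wordMeasure.toOuterMeasure

theorem uniformMass_limitSet : Φ.uniformMass Φ.limitSet = 1 := by
  have : IsProbabilityMeasure Φ.wordMeasure := by unfold wordMeasure; infer_instance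
  have hpre : Φ.code ⁻¹' Φ.limitSet = univ := eq_univ_of_forall Φ.code_mem_limitSet
  rw [uniformMass, OuterMeasure.map_apply, hpre]
  exact measure_univ

theorem uniformMass_le (n : ℕ) {A : Set (EuclideanSpace ℝ (Fin d))} {W : Finset (Φ.Word 0 n)}
    (hW : ∀ ω, (Φ.cylinder 0 n ω ∩ A).Nonempty → ω ∈ W) :
    Φ.uniformMass A ≤ W.card / Nat.card (Φ.Word 0 n) := by
  have hsub : Φ.code ⁻¹' A ⊆ ⋃ ω ∈ W, {σ | Φ.seg σ 0 n = ω} := fun σ hσ =>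
    mem_iUnion₂.mpr ⟨Φ.seg σ 0 n, hW _ ⟨_, Φ.code_mem_cylinder σ n, hσ⟩, rfl⟩
  calc Φ.uniformMass A = Φ.wordMeasure (Φ.code ⁻¹' A) := rfl
    _ ≤ ∑ ω ∈ W, Φ.wordMeasure {σ | Φ.seg σ 0 n = ω} :=
        (measure_mono hsub).trans (measure_biUnion_finset_le _ _)
    _ = W.card / Nat.card (Φ.Word 0 n) := by
        simp only [wordMeasure_seg_eq, Finset.sum_const, nsmul_eq_mul, div_eq_mul_inv]

theorem uniformMass_closedBall_le {n : ℕ} {r : ℝ} (hr : 0 < r)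
    (hsize : ∀ ω, r ≤ Φ.segN 0 n ω) (x : EuclideanSpace ℝ (Fin d)) :
    Φ.uniformMass (closedBall x r) ≤ Φ.overlapBound / Nat.card (Φ.Word 0 n) := by
  let W := (toFinite {ω | (Φ.cylinder 0 n ω ∩ closedBall x r).Nonempty}).toFinset
  have hmem : ∀ ω, ω ∈ W ↔ (Φ.cylinder 0 n ω ∩ closedBall x r).Nonempty := fun ω =>
    Finite.mem_toFinset _
  have hcard : (W.card : ℝ≥0∞) ≤ Φ.overlapBound :=
    Φ.card_le_overlapBound hr (fun ω _ => hsize ω) fun ω => (hmem ω).mp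
  exact (Φ.uniformMass_le n fun ω => (hmem ω).mpr).trans (by gcongr)

end UniformMass

section DerivativeBounds

theorem Dnorm_pos (n : ℕ) (i : Φ.I n) : 0 < Φ.Dnorm n i := Φ.segN_pos _ _ _

theorem Dnorm_le_one (n : ℕ) (i : Φ.I n) : Φ.Dnorm n i ≤ 1 :=
  (Φ.segN_contract _ _ _).trans (pow_le_one₀ Φ.hη_pos.le Φ.hη_lt.le)

theorem segN_self (n : ℕ) (ω : Φ.Word n n) : Φ.segN n n ω = 1 := by
  have hpos := Φ.segN_pos n n ω
  have hsq := (Φ.segN_split n n n le_rfl le_rfl ω ω ω (fun _ _ _ => rfl) fun _ _ _ => rfl).1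
  have hle : Φ.segN n n ω ≤ 1 := by simpa using Φ.segN_contract n n ω
  exact hle.antisymm ((le_mul_iff_one_le_left hpos).mp hsq)

theorem segN_seg_succ_le (σ : (n : ℕ) → Φ.I n) (n : ℕ) :
    Φ.segN 0 (n + 1) (Φ.seg σ 0 (n + 1)) ≤ Φ.segN 0 n (Φ.seg σ 0 n) * Φ.Dnorm n (σ n) := by
  rw [Dnorm, ← seg_succ_eq_single]
  exact (Φ.segN_split 0 n (n + 1) n.zero_le n.le_succ _ _ _
    (fun _ _ _ => rfl) fun _ _ _ => rfl).1

theorem segN_seg_mul_Dnorm_div_le (σ : (n : ℕ) → Φ.I n) (n : ℕ) :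
    Φ.segN 0 n (Φ.seg σ 0 n) * (Φ.Dnorm n (σ n) / Φ.K) ≤
      Φ.segN 0 (n + 1) (Φ.seg σ 0 (n + 1)) := by
  rw [← mul_div_assoc, div_le_iff₀' Φ.K_pos, Dnorm, ← seg_succ_eq_single]
  exact (Φ.segN_split 0 n (n + 1) n.zero_le n.le_succ _ _ _
    (fun _ _ _ => rfl) fun _ _ _ => rfl).2

/-- The product `c̄_0 ⋯ c̄_{n-1}`, an upper bound for the derivative norms of words of
length `n`. -/
def cmaxProd (n : ℕ) : ℝ := ∏ j ∈ Finset.range n, Φ.cmax j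

/-- The product `(c̲_0 / K) ⋯ (c̲_{n-1} / K)`, a lower bound for the derivative norms of words of
length `n`: each concatenation costs one factor of the distortion constant. -/
def cminProd (n : ℕ) : ℝ := ∏ j ∈ Finset.range n, Φ.cmin j / Φ.K

theorem card_word_eq_prod (n : ℕ) :
    Nat.card (Φ.Word 0 n) = ∏ j ∈ Finset.range n, Nat.card (Φ.I j) := by
  rw [Nat.card_pi, Finset.range_eq_Ico,
    Finset.prod_coe_sort (Finset.Ico 0 n) fun j => Nat.card (Φ.I j)]

variable [∀ n, Finite (Φ.I n)]

theorem Dnorm_le_cmax (n : ℕ) (i : Φ.I n) : Φ.Dnorm n i ≤ Φ.cmax n :=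
  le_ciSup (finite_range _).bddAbove i

theorem cmin_le_Dnorm (n : ℕ) (i : Φ.I n) : Φ.cmin n ≤ Φ.Dnorm n i :=
  ciInf_le (finite_range _).bddBelow i

theorem cmax_pos (n : ℕ) : 0 < Φ.cmax n :=
  (Φ.Dnorm_pos n (Classical.arbitrary _)).trans_le (Φ.Dnorm_le_cmax n _)

theorem cmin_pos (n : ℕ) : 0 < Φ.cmin n := by
  obtain ⟨i, hi⟩ := exists_eq_ciInf_of_finite (f := Φ.Dnorm n)
  exact (Φ.Dnorm_pos n i).trans_eq hi

theorem log_one_div_cmax_nonneg (n : ℕ) : 0 ≤ Real.log (1 / Φ.cmax n) :=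
  Real.log_nonneg (one_le_one_div (Φ.cmax_pos n) (ciSup_le (Φ.Dnorm_le_one n)))

theorem log_one_div_cmin_nonneg (n : ℕ) : 0 ≤ Real.log (1 / Φ.cmin n) :=
  Real.log_nonneg (one_le_one_div (Φ.cmin_pos n)
    ((Φ.cmin_le_Dnorm n (Classical.arbitrary _)).trans (Φ.Dnorm_le_one n _)))

theorem cmaxProd_pos (n : ℕ) : 0 < Φ.cmaxProd n := Finset.prod_pos fun j _ => Φ.cmax_pos j

theorem cminProd_pos (n : ℕ) : 0 < Φ.cminProd n :=
  Finset.prod_pos fun j _ => div_pos (Φ.cmin_pos j) Φ.K_pos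

theorem segN_le_cmaxProd {n : ℕ} (ω : Φ.Word 0 n) : Φ.segN 0 n ω ≤ Φ.cmaxProd n := by
  obtain ⟨σ, rfl⟩ := Φ.seg_surjective 0 n ω
  induction n with
  | zero => simp [segN_self, cmaxProd]
  | succ n ih =>
    rw [cmaxProd, Finset.prod_range_succ, ← cmaxProd]
    exact (Φ.segN_seg_succ_le σ n).trans (mul_le_mul ih (Φ.Dnorm_le_cmax n _)
      (Φ.Dnorm_pos n _).le (Φ.cmaxProd_pos n).le)

theorem cminProd_le_segN {n : ℕ} (ω : Φ.Word 0 n) : Φ.cminProd n ≤ Φ.segN 0 n ω := by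
  obtain ⟨σ, rfl⟩ := Φ.seg_surjective 0 n ω
  induction n with
  | zero => simp [segN_self, cminProd]
  | succ n ih =>
    rw [cminProd, Finset.prod_range_succ, ← cminProd]
    exact (mul_le_mul ih (div_le_div_of_nonneg_right (Φ.cmin_le_Dnorm n (σ n)) Φ.K_pos.le)
      (div_pos (Φ.cmin_pos n) Φ.K_pos).le (Φ.segN_pos _ _ _).le).trans
        (Φ.segN_seg_mul_Dnorm_div_le σ n)

theorem tendsto_cminProd_zero : Tendsto Φ.cminProd atTop (𝓝 0) :=
  squeeze_zero (fun n => (Φ.cminProd_pos n).le)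
    (fun n => (Φ.cminProd_le_segN (Classical.arbitrary _)).trans (Φ.segN_contract 0 n _))
    (tendsto_pow_atTop_nhds_zero_of_lt_one Φ.hη_pos.le Φ.hη_lt)

end DerivativeBounds

section UpperBound

theorem ediam_cylinder_le {m n : ℕ} (ω : Φ.Word m n) :
    ediam (Φ.cylinder m n ω) ≤ ENNReal.ofReal (diam Φ.X * Φ.segN m n ω) :=
  ediam_le_of_forall_dist_le fun _ hx _ hy => Φ.dist_le_of_mem_cylinder hx hy

theorem hausdorffMeasure_limitSet_le_liminf_Z [∀ n, Countable (Φ.I n)] {t : ℝ} (ht : 0 ≤ t) :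
    μH[t] Φ.limitSet ≤ liminf (fun n => ENNReal.ofReal (diam Φ.X) ^ t * Φ.Z n t) atTop := by
  have hmesh : Tendsto (fun n => ENNReal.ofReal (diam Φ.X * Φ.η ^ n)) atTop (𝓝 0) := by
    simpa using ENNReal.tendsto_ofReal
      ((tendsto_pow_atTop_nhds_zero_of_lt_one Φ.hη_pos.le Φ.hη_lt).const_mul (diam Φ.X))
  refine (Measure.hausdorffMeasure_le_liminf_tsum t Φ.limitSet _ hmesh (Φ.cylinder 0)
    (Eventually.of_forall fun n ω => (Φ.ediam_cylinder_le ω).trans <| ENNReal.ofReal_le_ofReal <|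
      mul_le_mul_of_nonneg_left (Φ.segN_contract 0 n ω) diam_nonneg)
    (Eventually.of_forall fun n => iInter_subset _ n)).trans (liminf_le_liminf ?_)
  refine Eventually.of_forall fun n => ?_
  rw [Z, ← ENNReal.tsum_mul_left]
  refine ENNReal.tsum_le_tsum fun ω => ?_
  calc ediam (Φ.cylinder 0 n ω) ^ t
      ≤ ENNReal.ofReal (diam Φ.X * Φ.segN 0 n ω) ^ t :=
        ENNReal.rpow_le_rpow (Φ.ediam_cylinder_le ω) ht
    _ = ENNReal.ofReal (diam Φ.X) ^ t * ENNReal.ofReal (Φ.segN 0 n ω ^ t) := by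
        rw [ENNReal.ofReal_mul diam_nonneg, ENNReal.mul_rpow_of_nonneg _ _ ht,
          ENNReal.ofReal_rpow_of_pos (Φ.segN_pos 0 n ω)]

theorem hausdorffMeasure_limitSet_eq_zero [∀ n, Countable (Φ.I n)] {t : ℝ} (ht : 0 ≤ t)
    (hZ : Tendsto (fun n => Φ.Z n t) atTop (𝓝 0)) : μH[t] Φ.limitSet = 0 := by
  have hlim := ENNReal.Tendsto.const_mul (a := ENNReal.ofReal (diam Φ.X) ^ t) hZ
    (.inr (ENNReal.rpow_ne_top_of_nonneg ht ENNReal.ofReal_ne_top))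
  rw [mul_zero] at hlim
  exact nonpos_iff_eq_zero.mp
    ((Φ.hausdorffMeasure_limitSet_le_liminf_Z ht).trans_eq hlim.liminf_eq)

variable [∀ n, Finite (Φ.I n)]

theorem Z_le_card_mul_cmaxProd_rpow (n : ℕ) {t : ℝ} (ht : 0 ≤ t) :
    Φ.Z n t ≤ ENNReal.ofReal (Nat.card (Φ.Word 0 n) * Φ.cmaxProd n ^ t) := by
  have := Fintype.ofFinite (Φ.Word 0 n)
  calc Φ.Z n t ≤ ∑' _ : Φ.Word 0 n, ENNReal.ofReal (Φ.cmaxProd n ^ t) :=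
        ENNReal.tsum_le_tsum fun ω => ENNReal.ofReal_le_ofReal <|
          Real.rpow_le_rpow (Φ.segN_pos 0 n ω).le (Φ.segN_le_cmaxProd ω) ht
    _ = ENNReal.ofReal (Nat.card (Φ.Word 0 n) * Φ.cmaxProd n ^ t) := by
        rw [tsum_fintype, Finset.sum_const, Finset.card_univ, nsmul_eq_mul,
          ENNReal.ofReal_mul (Nat.cast_nonneg _), ENNReal.ofReal_natCast,
          Nat.card_eq_fintype_card]

theorem card_mul_cmax_rpow_eq_exp (n : ℕ) (t : ℝ) :
    Nat.card (Φ.I n) * Φ.cmax n ^ t =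
      Real.exp (-(t * Real.log (1 / Φ.cmax n) - Real.log (Nat.card (Φ.I n)))) := by
  rw [Real.rpow_def_of_pos (Φ.cmax_pos n), one_div, Real.log_inv]
  nth_rw 1 [← Real.exp_log (Nat.cast_pos.mpr (Nat.card_pos (α := Φ.I n)))]
  rw [← Real.exp_add]
  ring_nf

theorem tendsto_card_mul_cmaxProd_rpow_zero {t : ℝ} (ht : 0 ≤ t)
    (hbdd : IsBoundedUnder (· ≤ ·) atTop fun n : ℕ => Real.log (Nat.card (Φ.I n)) / n)
    (h : limsup (fun n : ℕ => Real.log (Nat.card (Φ.I n)) / n) atTop <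
      t * liminf (fun n : ℕ => Real.log (1 / Φ.cmax n) / n) atTop) :
    Tendsto (fun n => Nat.card (Φ.Word 0 n) * Φ.cmaxProd n ^ t) atTop (𝓝 0) := by
  have hfactors : Tendsto (fun n => Nat.card (Φ.I n) * Φ.cmax n ^ t) atTop (𝓝 0) := by
    simp only [card_mul_cmax_rpow_eq_exp]
    exact Real.tendsto_exp_neg_atTop_nhds_zero.comp <|
      tendsto_mul_sub_atTop_of_limsup_div_lt ht hbdd (isBoundedUnder_of
        ⟨0, fun n => div_nonneg (Φ.log_one_div_cmax_nonneg n) n.cast_nonneg⟩) h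
  refine (tendsto_prod_range_zero (fun n => ?_) hfactors).congr fun n => ?_
  · exact mul_pos (Nat.cast_pos.mpr Nat.card_pos) (Real.rpow_pos_of_pos (Φ.cmax_pos n) t)
  · rw [Finset.prod_mul_distrib, Real.finsetProd_rpow _ _ fun j _ => (Φ.cmax_pos j).le,
      card_word_eq_prod, Nat.cast_prod, cmaxProd]

theorem dimH_limitSet_le_limsup_div_liminf
    (hbdd : IsBoundedUnder (· ≤ ·) atTop fun n : ℕ => Real.log (Nat.card (Φ.I n)) / n)
    (hpos : 0 < liminf (fun n : ℕ => Real.log (1 / Φ.cmax n) / n) atTop) :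
    dimH Φ.limitSet ≤ ENNReal.ofReal
      (limsup (fun n : ℕ => Real.log (Nat.card (Φ.I n)) / n) atTop /
        liminf (fun n : ℕ => Real.log (1 / Φ.cmax n) / n) atTop) := by
  refine dimH_le fun t htop => not_lt.mp fun hlt => ?_
  rw [← ENNReal.ofReal_coe_nnreal, ENNReal.ofReal_lt_ofReal_iff'] at hlt
  have hcover := ENNReal.tendsto_ofReal
    (Φ.tendsto_card_mul_cmaxProd_rpow_zero t.coe_nonneg hbdd ((div_lt_iff₀ hpos).mp hlt.1))
  rw [ENNReal.ofReal_zero] at hcover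
  have hZ : Tendsto (fun n => Φ.Z n t) atTop (𝓝 0) :=
    tendsto_of_tendsto_of_tendsto_of_le_of_le tendsto_const_nhds hcover (fun _ => zero_le)
      fun n => Φ.Z_le_card_mul_cmaxProd_rpow n t.coe_nonneg
  exact ENNReal.zero_ne_top ((Φ.hausdorffMeasure_limitSet_eq_zero t.coe_nonneg hZ).symm.trans htop)

end UpperBound

section LowerBound

variable [∀ n, Finite (Φ.I n)]

theorem one_le_hausdorffMeasure_limitSet {s : ℝ} (hs : 0 ≤ s)
    (h : Tendsto (fun k => Nat.card (Φ.Word 0 k) * Φ.cminProd (k + 1) ^ s) atTop atTop) :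
    1 ≤ μH[s] Φ.limitSet := by
  rw [← Φ.uniformMass_limitSet]
  refine le_hausdorffMeasure_of_closedBall_le ?_ _
  obtain ⟨k₀, hk₀⟩ := eventually_atTop.mp (h.eventually_ge_atTop Φ.overlapBound.toReal)
  filter_upwards [Ioc_mem_nhdsGT (Φ.cminProd_pos k₀)] with r hr x
  obtain ⟨k, hk, hlt, hle⟩ := exists_lt_le_of_tendsto_zero Φ.tendsto_cminProd_zero hr.1 hr.2
  have hcount : Φ.overlapBound ≤ ENNReal.ofReal r ^ s * Nat.card (Φ.Word 0 k) := by
    rw [ENNReal.ofReal_rpow_of_pos hr.1, ← ENNReal.ofReal_natCast,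
      ← ENNReal.ofReal_mul' (Nat.cast_nonneg _), mul_comm]
    refine (ENNReal.le_ofReal_iff_toReal_le Φ.overlapBound_ne_top
      (mul_nonneg (Nat.cast_nonneg _) (Real.rpow_nonneg hr.1.le s))).mpr ((hk₀ k hk).trans ?_)
    exact mul_le_mul_of_nonneg_left
      (Real.rpow_le_rpow (Φ.cminProd_pos _).le hlt.le hs) (Nat.cast_nonneg _)
  exact (Φ.uniformMass_closedBall_le hr.1 (fun ω => hle.trans (Φ.cminProd_le_segN ω)) x).trans
    (ENNReal.div_le_of_le_mul hcount)

theorem card_mul_cmin_div_rpow_eq_exp (n : ℕ) (s : ℝ) :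
    Nat.card (Φ.I n) * (Φ.cmin (n + 1) / Φ.K) ^ s =
      Real.exp (Real.log (Nat.card (Φ.I n)) - s * Real.log (1 / Φ.cmin (n + 1)) +
        -(s * Real.log Φ.K)) := by
  rw [Real.rpow_def_of_pos (div_pos (Φ.cmin_pos _) Φ.K_pos), one_div, Real.log_inv,
    Real.log_div (Φ.cmin_pos _).ne' Φ.K_pos.ne']
  nth_rw 1 [← Real.exp_log (Nat.cast_pos.mpr (Nat.card_pos (α := Φ.I n)))]
  rw [← Real.exp_add]
  ring_nf

theorem card_mul_cminProd_succ_rpow_eq_prod (k : ℕ) (s : ℝ) :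
    Nat.card (Φ.Word 0 k) * Φ.cminProd (k + 1) ^ s =
      (∏ j ∈ Finset.range k, Nat.card (Φ.I j) * (Φ.cmin (j + 1) / Φ.K) ^ s) *
        (Φ.cmin 0 / Φ.K) ^ s := by
  have hnonneg : ∀ j, 0 ≤ Φ.cmin j / Φ.K := fun j => (div_pos (Φ.cmin_pos j) Φ.K_pos).le
  rw [cminProd, Finset.prod_range_succ', Real.mul_rpow
    (Finset.prod_nonneg fun j _ => hnonneg _) (hnonneg 0), Finset.prod_mul_distrib,
    Real.finsetProd_rpow _ _ fun j _ => hnonneg _, card_word_eq_prod, Nat.cast_prod, mul_assoc]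

theorem tendsto_card_mul_cminProd_succ_rpow_atTop {s : ℝ} (hs : 0 ≤ s)
    (hbdd : IsBoundedUnder (· ≤ ·) atTop fun n : ℕ => Real.log (1 / Φ.cmin n) / n)
    (h : s * limsup (fun n : ℕ => Real.log (1 / Φ.cmin n) / n) atTop <
      liminf (fun n : ℕ => Real.log (Nat.card (Φ.I n)) / n) atTop) :
    Tendsto (fun k => Nat.card (Φ.Word 0 k) * Φ.cminProd (k + 1) ^ s) atTop atTop := by
  have hpos : ∀ n, 0 < (Φ.cmin n / Φ.K) ^ s := fun n =>
    Real.rpow_pos_of_pos (div_pos (Φ.cmin_pos n) Φ.K_pos) s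
  have hfactors :
      Tendsto (fun n => Nat.card (Φ.I n) * (Φ.cmin (n + 1) / Φ.K) ^ s) atTop atTop := by
    simp only [card_mul_cmin_div_rpow_eq_exp]
    have hcard : IsBoundedUnder (· ≥ ·) atTop fun n : ℕ => Real.log (Nat.card (Φ.I n)) / n :=
      isBoundedUnder_of ⟨0, fun n => div_nonneg (Real.log_natCast_nonneg _) n.cast_nonneg⟩
    exact Real.tendsto_exp_atTop.comp <| tendsto_atTop_add_const_right _ _ <|
      tendsto_sub_mul_succ_atTop_of_limsup_div_lt (v := fun n => Real.log (1 / Φ.cmin n))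
        hs hcard hbdd h
  simp only [card_mul_cminProd_succ_rpow_eq_prod]
  exact (tendsto_prod_range_atTop (fun n => mul_pos (Nat.cast_pos.mpr Nat.card_pos) (hpos _))
    hfactors).atTop_mul_const (hpos 0)

theorem liminf_div_limsup_le_dimH_limitSet
    (hbdd : IsBoundedUnder (· ≤ ·) atTop fun n : ℕ => Real.log (1 / Φ.cmin n) / n) :
    ENNReal.ofReal (liminf (fun n : ℕ => Real.log (Nat.card (Φ.I n)) / n) atTop /
      limsup (fun n : ℕ => Real.log (1 / Φ.cmin n) / n) atTop) ≤ dimH Φ.limitSet := by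
  have hlimsup : 0 ≤ limsup (fun n : ℕ => Real.log (1 / Φ.cmin n) / n) atTop :=
    le_limsup_of_frequently_le (Frequently.of_forall fun n =>
      div_nonneg (Φ.log_one_div_cmin_nonneg n) n.cast_nonneg) hbdd
  refine ENNReal.le_of_forall_nnreal_lt fun s hlt => ?_
  rw [ENNReal.lt_ofReal_iff_toReal_lt ENNReal.coe_ne_top, ENNReal.coe_toReal] at hlt
  have hlimsup_pos := hlimsup.lt_of_ne fun h0 => by
    rw [← h0, div_zero] at hlt
    exact hlt.not_ge s.coe_nonneg
  refine le_dimH_of_hausdorffMeasure_ne_zero (zero_lt_one.trans_le ?_).ne'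
  exact Φ.one_le_hausdorffMeasure_limitSet s.coe_nonneg <|
    Φ.tendsto_card_mul_cminProd_succ_rpow_atTop s.coe_nonneg hbdd ((lt_div_iff₀ hlimsup_pos).mp hlt)

end LowerBound

theorem dimH_between_general [∀ n, Finite (Φ.I n)] (am ap bm bp : ℝ) (hbm : 0 < bm)
    (hlam : liminf (fun n : ℕ => Real.log (Nat.card (Φ.I n)) / n) atTop = am)
    (hlap : limsup (fun n : ℕ => Real.log (Nat.card (Φ.I n)) / n) atTop = ap)
    (hlbm : liminf (fun n : ℕ => Real.log (1 / Φ.cmax n) / n) atTop = bm)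
    (hlbp : limsup (fun n : ℕ => Real.log (1 / Φ.cmin n) / n) atTop = bp)
    (hbdda : IsBoundedUnder (· ≤ ·) atTop (fun n : ℕ => Real.log (Nat.card (Φ.I n)) / n))
    (hbddb : IsBoundedUnder (· ≤ ·) atTop (fun n : ℕ => Real.log (1 / Φ.cmin n) / n)) :
    ENNReal.ofReal (am / bp) ≤ dimH Φ.limitSet ∧
      dimH Φ.limitSet ≤ ENNReal.ofReal (ap / bm) := by
  subst hlam hlap hlbm hlbp
  exact ⟨Φ.liminf_div_limsup_le_dimH_limitSet hbddb, Φ.dimH_limitSet_le_limsup_div_liminf hbdda hbm⟩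

end NCIFS

/-- Suppose the finite NCIFS `Φ` satisfies
`0 < a₋ = liminf (1/n) log #I^{(n)} ≤ limsup (1/n) log #I^{(n)} = a₊ < ∞` and
`0 < b₋ = liminf (1/n) log(1/c̄_n) ≤ limsup (1/n) log(1/c̲_n) = b₊ < ∞`, and is weakly
balanced (so that Bowen's formula holds). Then `a₋/b₊ ≤ HD(J(Φ)) ≤ a₊/b₋`. -/
theorem NCIFS.dimH_between {d : ℕ} (Φ : NCIFS d) [∀ n, Finite (Φ.I n)]
    (hbal : Tendsto (fun n : ℕ => Real.log (Φ.ρ n) / n) atTop (𝓝 0))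
    (am ap bm bp : ℝ) (ham : 0 < am) (hbm : 0 < bm)
    (hlam : liminf (fun n : ℕ => Real.log (Nat.card (Φ.I n)) / n) atTop = am)
    (hlap : limsup (fun n : ℕ => Real.log (Nat.card (Φ.I n)) / n) atTop = ap)
    (hlbm : liminf (fun n : ℕ => Real.log (1 / Φ.cmax n) / n) atTop = bm)
    (hlbp : limsup (fun n : ℕ => Real.log (1 / Φ.cmin n) / n) atTop = bp)
    (hbdda : IsBoundedUnder (· ≤ ·) atTop (fun n : ℕ => Real.log (Nat.card (Φ.I n)) / n))
    (hbddb : IsBoundedUnder (· ≤ ·) atTop (fun n : ℕ => Real.log (1 / Φ.cmin n) / n)) :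
    ENNReal.ofReal (am / bp) ≤ dimH Φ.limitSet ∧
      dimH Φ.limitSet ≤ ENNReal.ofReal (ap / bm) :=
  Φ.dimH_between_general am ap bm bp hbm hlam hlap hlbm hlbp hbdda hbddb
end
end

section
/- For every 0 < t₁ < t₂ < d and every ε > 0, there exists a perfectly balanced NCIFS Φ in ℝ^d (all maps at each level are affine similarities with the same contraction ratio) with limsup_{n→∞} (1/n) log #I^(n) ≤ ε such that HD(J(Φ)) = t₁ while B(Φ) = t₂. In particular, Bowen's formula can fail for systems of arbitrarily small exponential growth. -/
open Metric Set Filter Topology MeasureTheory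
open scoped ENNReal

noncomputable section

/-!
All the branching is concentrated in rare bursts: a burst of size `a` replaces each cube by
`2 ^ (a * d)` adjacent cubes of ratio `2 ^ (-(δ + β * a))`, packed into one small block, and between
bursts there is a single map of ratio `2 ^ (-δ)`. If `A` denotes the sum of the bursts so far, they
occur exactly when the level reaches `P * (A + 1)`, and have size `r * (A + 1)`.

The pressure is smallest just before a burst, where `2 ^ (A * d)` cubes have side about
`2 ^ (-(δ * P + β) * A)`; this gives the Bowen dimension `d / (δ * P + β)`. The Hausdorff dimension,
however, is detected by covering with the blocks of the next burst, which are equally many but only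
have side about `2 ^ (-(δ * P + β + (β - 1) * r) * A)`; conversely, the inverse of the map that
sends the binary digits of a point of the unit cube to the point of the limit set with these digits
is Hölder continuous with exponent `1 / (δ * P + β + (β - 1) * r)`. The two denominators can be
prescribed, and a large `P` makes the growth rate of the alphabets small.
-/

open scoped NNReal

section HausdorffDimension

variable {X Y : Type*} [EMetricSpace X] [EMetricSpace Y]

lemma dimH_le_of_frequently_card_mul_rpow_le {β : Type*} {l : Filter β} {ι : β → Type*}
    [∀ n, Fintype (ι n)] {s : Set X} {U : ∀ n, ι n → Set X} {r : β → ℝ≥0∞} {C : ℝ≥0∞} {t : ℝ}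
    (ht : 0 ≤ t) (hC : C ≠ ∞) (hr : Tendsto r l (𝓝 0)) (hcover : ∀ n, s ⊆ ⋃ i, U n i)
    (hdiam : ∀ n i, ediam (U n i) ≤ r n)
    (hcard : ∃ᶠ n in l, Fintype.card (ι n) * r n ^ t ≤ C) :
    dimH s ≤ ENNReal.ofReal t := by
  borelize X
  have hmeasure : μH[t] s ≤ C := by
    refine (Measure.hausdorffMeasure_le_liminf_sum t s r hr U (.of_forall hdiam)
      (.of_forall hcover)).trans (liminf_le_of_frequently_le' (hcard.mono fun n hn ↦ ?_))
    calc ∑ i, ediam (U n i) ^ t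
        ≤ ∑ _i : ι n, r n ^ t :=
          Finset.sum_le_sum fun i _ ↦ ENNReal.rpow_le_rpow (hdiam n i) ht
      _ = Fintype.card (ι n) * r n ^ t := by
          rw [Finset.sum_const, Finset.card_univ, nsmul_eq_mul]
      _ ≤ C := hn
  refine dimH_le_of_hausdorffMeasure_ne_top ?_
  rw [Real.coe_toNNReal t ht]
  exact ne_top_of_le_ne_top hC hmeasure

lemma mul_dimH_le_dimH_image_of_edist_le_rpow {f : X → Y} {s : Set X} {C α : ℝ≥0} (hα : 0 < α)
    (hf : ∀ x ∈ s, ∀ y ∈ s, edist x y ≤ C * edist (f x) (f y) ^ (α : ℝ)) :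
    α * dimH s ≤ dimH (f '' s) := by
  rcases s.eq_empty_or_nonempty with rfl | ⟨x₀, -⟩
  · simp
  have : Nonempty X := ⟨x₀⟩
  have hinj : InjOn f s := fun x hx y hy hxy ↦ by
    simpa [hxy, hα] using hf x hx y hy
  have hholder : HolderOnWith C α (Function.invFunOn f s) (f '' s) := by
    rintro _ ⟨x, hx, rfl⟩ _ ⟨y, hy, rfl⟩
    simpa only [hinj.leftInvOn_invFunOn hx, hinj.leftInvOn_invFunOn hy] using hf x hx y hy
  have hdim := hholder.dimH_image_le hα
  rwa [hinj.invFunOn_image Subset.rfl, ENNReal.le_div_iff_mul_le (by simp [hα.ne']) (by simp),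
    mul_comm] at hdim

end HausdorffDimension

lemma dist_le_sqrt_mul_of_forall_abs_sub_le {ι : Type*} [Fintype ι] {x y : EuclideanSpace ℝ ι}
    {r : ℝ} (hr : 0 ≤ r) (h : ∀ k, |x k - y k| ≤ r) : dist x y ≤ √(Fintype.card ι) * r := by
  calc dist x y = √(∑ k, dist (x k) (y k) ^ 2) := EuclideanSpace.dist_eq x y
    _ ≤ √(∑ _k : ι, r ^ 2) := by
        gcongr with k
        exact h k
    _ = √(Fintype.card ι) * r := by simp [Real.sqrt_sq hr]

lemma NCIFS.Bdim_eq_ofReal {d : ℕ} (Φ : NCIFS d) {B : ℝ}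
    (hpos : ∀ t, 0 ≤ t → t < B → 0 < Φ.lowP t) (hnonpos : ∀ t, B < t → Φ.lowP t ≤ 0) :
    Φ.Bdim = ENNReal.ofReal B := by
  apply le_antisymm
  · refine iSup_le fun ⟨t, _, ht⟩ ↦ ENNReal.ofReal_le_ofReal ?_
    by_contra! hBt
    exact (hnonpos t hBt).not_gt ht
  · refine le_of_forall_lt_imp_le_of_dense fun x hx ↦ ?_
    have hx_top : x ≠ ∞ := ne_top_of_lt hx
    have hx_pos : 0 < Φ.lowP x.toReal :=
      hpos _ ENNReal.toReal_nonneg ((ENNReal.lt_ofReal_iff_toReal_lt hx_top).1 hx)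
    calc x = ENNReal.ofReal x.toReal := (ENNReal.ofReal_toReal hx_top).symm
      _ ≤ Φ.Bdim := le_iSup (fun t : {t : ℝ // 0 ≤ t ∧ (0 : EReal) < Φ.lowP t} ↦
          ENNReal.ofReal t.1) ⟨x.toReal, ENNReal.toReal_nonneg, hx_pos⟩

section UnitCube

/-- The closed unit cube `[0, 1]^d`, on which all the systems below act. -/
def unitCube (d : ℕ) : Set (EuclideanSpace ℝ (Fin d)) := {x | ∀ k, x k ∈ Icc (0 : ℝ) 1}

variable (d : ℕ)

lemma unitCube_eq_preimage_pi : unitCube d =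
    (EuclideanSpace.equiv (Fin d) ℝ).toHomeomorph ⁻¹' univ.pi fun _ ↦ Icc (0 : ℝ) 1 := by
  ext x
  simp only [unitCube, mem_preimage, mem_univ_pi]
  rfl

lemma interior_unitCube : interior (unitCube d) = {x | ∀ k, x k ∈ Ioo (0 : ℝ) 1} := by
  rw [unitCube_eq_preimage_pi, ← Homeomorph.preimage_interior, interior_pi_set finite_univ]
  ext x
  simp [Set.mem_pi]

lemma isCompact_unitCube : IsCompact (unitCube d) := by
  rw [unitCube_eq_preimage_pi, Homeomorph.isCompact_preimage]
  exact isCompact_univ_pi fun _ ↦ isCompact_Icc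

lemma convex_unitCube : Convex ℝ (unitCube d) := fun _ hx _ hy _ _ ha hb hab k ↦
  convex_Icc (0 : ℝ) 1 (hx k) (hy k) ha hb hab

lemma nonempty_interior_unitCube : (interior (unitCube d)).Nonempty := by
  rw [interior_unitCube]
  exact ⟨WithLp.toLp 2 fun _ ↦ 1 / 2, fun k ↦ by norm_num⟩

lemma closure_interior_unitCube : closure (interior (unitCube d)) = unitCube d := by
  rw [(convex_unitCube d).closure_interior_eq_closure_of_nonempty_interior
    (nonempty_interior_unitCube d), (isCompact_unitCube d).isClosed.closure_eq]

end UnitCube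

/-- Data of a perfectly balanced system of homotheties of the unit cube: at level `j` the images
are `m j ^ d` adjacent subcubes of side `c j`, packed into a block of side `c j * m j` at the
corner `0` of the cube. The block side is bounded by `η < 1`. -/
structure CornerGrid where
  m : ℕ → ℕ
  c : ℕ → ℝ
  η : ℝ
  m_pos : ∀ j, 0 < m j
  c_pos : ∀ j, 0 < c j
  c_mul_m_le : ∀ j, c j * m j ≤ η
  η_lt_one : η < 1

namespace CornerGrid

variable (p : CornerGrid)

lemma c_mul_m_pos (j : ℕ) : 0 < p.c j * p.m j := mul_pos (p.c_pos j) (by exact_mod_cast p.m_pos j)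

lemma η_pos : 0 < p.η := (p.c_mul_m_pos 0).trans_le (p.c_mul_m_le 0)

lemma c_le_η (j : ℕ) : p.c j ≤ p.η :=
  (le_mul_of_one_le_right (p.c_pos j).le (by exact_mod_cast p.m_pos j)).trans (p.c_mul_m_le j)

/-- The contraction ratio of a word on the levels `a, …, b - 1`. -/
def ratio (a b : ℕ) : ℝ := ∏ l ∈ Finset.Ico a b, p.c l

lemma ratio_pos (a b : ℕ) : 0 < p.ratio a b := Finset.prod_pos fun j _ ↦ p.c_pos j

lemma ratio_mul_ratio {a k b : ℕ} (hak : a ≤ k) (hkb : k ≤ b) :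
    p.ratio a k * p.ratio k b = p.ratio a b :=
  Finset.prod_Ico_consecutive _ hak hkb

lemma ratio_self (a : ℕ) : p.ratio a a = 1 := by simp [ratio]

lemma ratio_succ {a b : ℕ} (h : a ≤ b) : p.ratio a (b + 1) = p.ratio a b * p.c b :=
  Finset.prod_Ico_succ_top h _

lemma ratio_le_pow (a b : ℕ) : p.ratio a b ≤ p.η ^ (b - a) :=
  calc p.ratio a b ≤ ∏ _l ∈ Finset.Ico a b, p.η :=
        Finset.prod_le_prod (fun j _ ↦ (p.c_pos j).le) fun j _ ↦ p.c_le_η j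
    _ = p.η ^ (b - a) := by simp

/-- Sequences of positions of the subcubes along one coordinate axis. -/
abbrev Digits := (j : ℕ) → Fin (p.m j)

/-- One coordinate of the image of the origin under the word on the levels `a, …, b - 1` whose
positions along that axis are `e`. -/
def offset (e : p.Digits) (a b : ℕ) : ℝ := ∑ j ∈ Finset.Ico a b, p.ratio a (j + 1) * (e j : ℕ)

variable {p} in
lemma offset_congr {e e' : p.Digits} {a b : ℕ} (h : ∀ j ∈ Finset.Ico a b, e j = e' j) :
    p.offset e a b = p.offset e' a b :=
  Finset.sum_congr rfl fun j hj ↦ by rw [h j hj]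

section Offset

variable (e : p.Digits)

lemma offset_self (a : ℕ) : p.offset e a a = 0 := by simp [offset]

lemma offset_succ {a b : ℕ} (h : a ≤ b) :
    p.offset e a (b + 1) = p.offset e a b + p.ratio a (b + 1) * (e b : ℕ) :=
  Finset.sum_Ico_succ_top h _

lemma offset_eq_offset_add_ratio_mul_offset {a k b : ℕ} (hak : a ≤ k) (hkb : k ≤ b) :
    p.offset e a b = p.offset e a k + p.ratio a k * p.offset e k b := by
  unfold offset
  rw [← Finset.sum_Ico_consecutive _ hak hkb, Finset.mul_sum]
  congr 1
  refine Finset.sum_congr rfl fun j hj ↦ ?_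
  have hkj : k ≤ j + 1 := (Finset.mem_Ico.1 hj).1.trans j.le_succ
  rw [← p.ratio_mul_ratio hak hkj, mul_assoc]

lemma offset_nonneg (a b : ℕ) : 0 ≤ p.offset e a b :=
  Finset.sum_nonneg fun _ _ ↦ mul_nonneg (p.ratio_pos _ _).le (Nat.cast_nonneg _)

lemma offset_mono {a k b : ℕ} (hak : a ≤ k) (hkb : k ≤ b) :
    p.offset e a k ≤ p.offset e a b := by
  rw [p.offset_eq_offset_add_ratio_mul_offset e hak hkb]
  exact le_add_of_nonneg_right (mul_nonneg (p.ratio_pos a k).le (p.offset_nonneg e k b))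

lemma offset_succ_add_ratio_succ_le {a b : ℕ} (h : a ≤ b) :
    p.offset e a (b + 1) + p.ratio a (b + 1) ≤
      p.offset e a b + p.ratio a b * (p.c b * p.m b) := by
  have hdigit : ((e b : ℕ) : ℝ) + 1 ≤ p.m b := by exact_mod_cast (e b).isLt
  calc p.offset e a (b + 1) + p.ratio a (b + 1)
      = p.offset e a b + p.ratio a b * (p.c b * ((e b : ℕ) + 1)) := by
        rw [p.offset_succ e h, p.ratio_succ h]; ring
    _ ≤ p.offset e a b + p.ratio a b * (p.c b * p.m b) := by
        have := p.ratio_pos a b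
        have := p.c_pos b
        gcongr

lemma offset_add_ratio_le_η {a b : ℕ} (h : a < b) : p.offset e a b + p.ratio a b ≤ p.η := by
  induction b, h using Nat.le_induction with
  | base =>
    have hstep := p.offset_succ_add_ratio_succ_le e (le_refl a)
    rw [p.offset_self, p.ratio_self, zero_add, one_mul] at hstep
    exact hstep.trans (p.c_mul_m_le a)
  | succ b hb ih =>
    refine (p.offset_succ_add_ratio_succ_le e (Nat.le_of_succ_le hb)).trans (le_trans ?_ ih)
    gcongr
    exact mul_le_of_le_one_right (p.ratio_pos a b).le ((p.c_mul_m_le b).trans p.η_lt_one.le)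

lemma offset_le_η (a b : ℕ) : p.offset e a b ≤ p.η := by
  rcases lt_or_ge a b with h | h
  · linarith [p.offset_add_ratio_le_η e h, p.ratio_pos a b]
  · simpa [offset, Finset.Ico_eq_empty_of_le h] using p.η_pos.le

lemma offset_add_ratio_le_one (a b : ℕ) : p.offset e a b + p.ratio a b ≤ 1 := by
  rcases lt_or_ge a b with h | h
  · exact (p.offset_add_ratio_le_η e h).trans p.η_lt_one.le
  · simp [offset, ratio, Finset.Ico_eq_empty_of_le h]

end Offset

section System

variable {d : ℕ}

/-- Words on the levels `a, …, b - 1`; each letter lists the position of a subcube along all `d`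
coordinate axes. -/
abbrev Word (d a b : ℕ) := (j : Finset.Ico a b) → Fin d → Fin (p.m j)

variable {p} {a b : ℕ}

/-- The positions along the `k`-th axis prescribed by a finite word, with the junk value `0` at
the levels outside the word. -/
def Word.digits (ω : p.Word d a b) (k : Fin d) : p.Digits := fun j ↦
  if h : j ∈ Finset.Ico a b then ω ⟨j, h⟩ k else ⟨0, p.m_pos j⟩

lemma Word.digits_of_mem (ω : p.Word d a b) (k : Fin d) {j : ℕ} (h : j ∈ Finset.Ico a b) :
    ω.digits k j = ω ⟨j, h⟩ k := dif_pos h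

lemma offset_digits_congr {a' b' : ℕ} {ω : p.Word d a b} {ω' : p.Word d a' b'}
    (hsub : Finset.Ico a b ⊆ Finset.Ico a' b')
    (h : ∀ (j : ℕ) (hj : j ∈ Finset.Ico a b) (hj' : j ∈ Finset.Ico a' b'),
      ω ⟨j, hj⟩ = ω' ⟨j, hj'⟩) (k : Fin d) :
    p.offset (ω.digits k) a b = p.offset (ω'.digits k) a b :=
  offset_congr fun j hj ↦ by
    rw [ω.digits_of_mem k hj, ω'.digits_of_mem k (hsub hj), h j hj (hsub hj)]

/-- The homothety of the unit cube associated with a word. -/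
def cellMap (ω : p.Word d a b) (x : EuclideanSpace ℝ (Fin d)) : EuclideanSpace ℝ (Fin d) :=
  p.ratio a b • x + WithLp.toLp 2 fun k ↦ p.offset (ω.digits k) a b

lemma cellMap_apply (ω : p.Word d a b) (x : EuclideanSpace ℝ (Fin d)) (k : Fin d) :
    cellMap ω x k = p.ratio a b * x k + p.offset (ω.digits k) a b := by
  simp [cellMap]

lemma dist_cellMap (ω : p.Word d a b) (x y : EuclideanSpace ℝ (Fin d)) :
    dist (cellMap ω x) (cellMap ω y) = p.ratio a b * dist x y := by
  rw [cellMap, cellMap, dist_add_right, dist_smul₀, Real.norm_of_nonneg (p.ratio_pos a b).le]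

lemma cellMap_self (ω : p.Word d a a) (x : EuclideanSpace ℝ (Fin d)) : cellMap ω x = x := by
  ext k
  rw [cellMap_apply, ratio_self, offset_self, one_mul, add_zero]

lemma mapsTo_cellMap_unitCube (ω : p.Word d a b) :
    MapsTo (cellMap ω) (unitCube d) (unitCube d) := fun x hx k ↦ by
  obtain ⟨hx0, hx1⟩ := hx k
  have hratio := p.ratio_pos a b
  rw [cellMap_apply]
  constructor
  · exact add_nonneg (mul_nonneg hratio.le hx0) (p.offset_nonneg _ a b)
  · linarith [mul_le_of_le_one_right hratio.le hx1, p.offset_add_ratio_le_one (ω.digits k) a b]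

lemma cellMap_eq_cellMap_cellMap {l : ℕ} (hal : a ≤ l) (hlb : l ≤ b) {ω : p.Word d a b}
    {ω₁ : p.Word d a l} {ω₂ : p.Word d l b}
    (h₁ : ∀ (j : ℕ) (hj : j ∈ Finset.Ico a l) (hj' : j ∈ Finset.Ico a b),
      ω₁ ⟨j, hj⟩ = ω ⟨j, hj'⟩)
    (h₂ : ∀ (j : ℕ) (hj : j ∈ Finset.Ico l b) (hj' : j ∈ Finset.Ico a b),
      ω₂ ⟨j, hj⟩ = ω ⟨j, hj'⟩) (x : EuclideanSpace ℝ (Fin d)) :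
    cellMap ω x = cellMap ω₁ (cellMap ω₂ x) := by
  ext k
  rw [cellMap_apply, cellMap_apply, cellMap_apply,
    p.offset_eq_offset_add_ratio_mul_offset _ hal hlb, ← p.ratio_mul_ratio hal hlb,
    offset_digits_congr (Finset.Ico_subset_Ico_right hlb) h₁,
    offset_digits_congr (Finset.Ico_subset_Ico_left hal) h₂]
  ring

lemma disjoint_cellMap_image_interior {n : ℕ} {ω ω' : p.Word d n (n + 1)} (hne : ω ≠ ω') :
    Disjoint (cellMap ω '' interior (unitCube d)) (cellMap ω' '' interior (unitCube d)) := by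
  rw [Set.disjoint_left, interior_unitCube]
  rintro _ ⟨x, hx, rfl⟩ ⟨y, hy, hxy⟩
  refine hne (funext fun ⟨j, hj⟩ ↦ ?_)
  obtain rfl : j = n := by rw [Finset.mem_Ico] at hj; omega
  ext k
  have hcoord : y k + (ω' ⟨j, hj⟩ k : ℕ) = x k + (ω ⟨j, hj⟩ k : ℕ) := by
    have hk := congrArg (fun z : EuclideanSpace ℝ (Fin d) ↦ z k) hxy
    simp only [cellMap_apply, p.offset_succ _ le_rfl, offset_self, zero_add,
      Word.digits_of_mem _ _ hj, ← mul_add] at hk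
    exact mul_left_cancel₀ (p.ratio_pos j (j + 1)).ne' hk
  have hlt : ((ω ⟨j, hj⟩ k : ℕ) : ℝ) < (ω' ⟨j, hj⟩ k : ℕ) + 1 := by
    linarith [(hx k).1, (hy k).2]
  have hgt : ((ω' ⟨j, hj⟩ k : ℕ) : ℝ) < (ω ⟨j, hj⟩ k : ℕ) + 1 := by
    linarith [(hx k).2, (hy k).1]
  norm_cast at hlt hgt
  omega

variable (p) (d)

/-- The perfectly balanced NCIFS in `ℝ^d` described by a corner grid. -/
def toNCIFS : NCIFS d where
  X := unitCube d
  hX_compact := isCompact_unitCube d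
  hX_nonempty := (nonempty_interior_unitCube d).mono interior_subset
  hX_regular := closure_interior_unitCube d
  hX_convex := convex_unitCube d
  I j := Fin d → Fin (p.m j)
  hI_ne j := ⟨fun _ ↦ ⟨0, p.m_pos j⟩⟩
  K := 1
  hK := le_rfl
  η := p.η
  hη_pos := p.η_pos
  hη_lt := p.η_lt_one
  segN a b _ := p.ratio a b
  segN_pos a b _ := p.ratio_pos a b
  segN_contract a b _ := p.ratio_le_pow a b
  segN_split _ _ _ hal hlb _ _ _ _ _ := by
    rw [p.ratio_mul_ratio hal hlb, one_mul]
    exact ⟨le_rfl, le_rfl⟩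
  wMap _ _ ω := cellMap ω
  wMap_id _ ω := cellMap_self ω
  wMap_mapsTo _ _ ω := mapsTo_cellMap_unitCube ω
  wMap_lip _ _ ω x _ y _ := (dist_cellMap ω x y).le
  wMap_colip _ _ ω x _ y _ := by rw [dist_cellMap, div_one]
  wMap_comp _ _ _ hal hlb _ _ _ h₁ h₂ x _ := cellMap_eq_cellMap_cellMap hal hlb h₁ h₂ x
  osc _ _ _ := disjoint_cellMap_image_interior

instance finite_toNCIFS_I (n : ℕ) : Finite ((p.toNCIFS d).I n) :=
  inferInstanceAs (Finite (Fin d → Fin (p.m n)))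

lemma card_toNCIFS_I (n : ℕ) : Nat.card ((p.toNCIFS d).I n) = p.m n ^ d := by
  change Nat.card (Fin d → Fin (p.m n)) = _
  simp

lemma limsup_log_card_toNCIFS_I_div_le {ε : ℝ} (h : ∀ n, d * Real.log (p.m n) ≤ ε * n) :
    limsup (fun n : ℕ ↦ Real.log (Nat.card ((p.toNCIFS d).I n)) / n) atTop ≤ ε := by
  simp only [card_toNCIFS_I, Nat.cast_pow, Real.log_pow]
  refine limsup_le_of_le (IsBoundedUnder.isCoboundedUnder_le ⟨0, ?_⟩) ?_
  · rw [eventually_map]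
    exact .of_forall fun n ↦ by positivity
  · filter_upwards [eventually_gt_atTop 0] with n hn
    rw [div_le_iff₀ (by exact_mod_cast hn)]
    exact h n

end System

/-- The number of cells of the `n`-th generation along each coordinate axis. -/
def cellCount (n : ℕ) : ℕ := ∏ l ∈ Finset.range n, p.m l

lemma cellCount_pos (n : ℕ) : 0 < p.cellCount n := Finset.prod_pos fun j _ ↦ p.m_pos j

lemma cellCount_succ (n : ℕ) : p.cellCount (n + 1) = p.cellCount n * p.m n :=
  Finset.prod_range_succ _ _

lemma card_word (d n : ℕ) : Fintype.card (p.Word d 0 n) = p.cellCount n ^ d := by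
  simp only [Fintype.card_pi, Finset.prod_const, Finset.card_univ, Fintype.card_fin,
    Finset.prod_pow]
  rw [cellCount, Finset.range_eq_Ico]
  exact congrArg (· ^ d) (Finset.prod_coe_sort (Finset.Ico 0 n) fun l ↦ p.m l)

lemma Z_toNCIFS (d n : ℕ) (t : ℝ) :
    (p.toNCIFS d).Z n t = ENNReal.ofReal ((p.cellCount n : ℝ) ^ d * p.ratio 0 n ^ t) := by
  change ∑' _ω : p.Word d 0 n, ENNReal.ofReal (p.ratio 0 n ^ t) = _
  rw [tsum_fintype, Finset.sum_const, Finset.card_univ, card_word, nsmul_eq_mul,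
    ENNReal.ofReal_mul (by positivity), ← Nat.cast_pow, ENNReal.ofReal_natCast]

/-- The side length of the block formed by the children of a cell of the `n`-th generation. -/
def blockSide (n : ℕ) : ℝ := p.ratio 0 n * (p.c n * p.m n)

lemma blockSide_pos (n : ℕ) : 0 < p.blockSide n := mul_pos (p.ratio_pos 0 n) (p.c_mul_m_pos n)

lemma tendsto_blockSide : Tendsto p.blockSide atTop (𝓝 0) := by
  refine squeeze_zero (fun n ↦ (p.blockSide_pos n).le) (fun n ↦ ?_)
    (tendsto_pow_atTop_nhds_zero_of_lt_one p.η_pos.le p.η_lt_one)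
  calc p.blockSide n ≤ p.ratio 0 n * 1 :=
        mul_le_mul_of_nonneg_left ((p.c_mul_m_le n).trans p.η_lt_one.le) (p.ratio_pos 0 n).le
    _ ≤ p.η ^ n := by simpa using p.ratio_le_pow 0 n

section UpperBound

variable {p} {d n : ℕ}

/-- The cube of side `blockSide n` formed by the children of the cell coded by `ω`. -/
def block (ω : p.Word d 0 n) : Set (EuclideanSpace ℝ (Fin d)) :=
  {z | ∀ k, z k ∈ Icc (p.offset (ω.digits k) 0 n) (p.offset (ω.digits k) 0 n + p.blockSide n)}

lemma ediam_block_le (ω : p.Word d 0 n) :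
    ediam (block ω) ≤ ENNReal.ofReal (√d * p.blockSide n) := by
  refine ediam_le fun x hx y hy ↦ ?_
  rw [edist_dist]
  refine ENNReal.ofReal_le_ofReal ?_
  have hdist := dist_le_sqrt_mul_of_forall_abs_sub_le (p.blockSide_pos n).le fun k ↦
    (abs_sub_le_of_le_of_le (hx k).1 (hx k).2 (hy k).1 (hy k).2).trans_eq (add_sub_cancel_left _ _)
  rwa [Fintype.card_fin] at hdist

variable (p d n)

lemma limitSet_toNCIFS_subset_iUnion_block :
    (p.toNCIFS d).limitSet ⊆ ⋃ ω : p.Word d 0 n, block ω := by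
  intro z hz
  obtain ⟨ω, x, hx, rfl⟩ := mem_iUnion.1 (mem_iInter.1 hz (n + 1))
  change p.Word d 0 (n + 1) at ω
  have hsub : Finset.Ico 0 n ⊆ Finset.Ico 0 (n + 1) := Finset.Ico_subset_Ico_right n.le_succ
  refine mem_iUnion.2 ⟨fun j ↦ ω ⟨j, hsub j.2⟩, fun k ↦ ?_⟩
  obtain ⟨hx0, hx1⟩ : x k ∈ Icc (0 : ℝ) 1 := hx k
  change cellMap ω x k ∈ _
  rw [cellMap_apply, offset_digits_congr (ω' := ω) hsub fun _ _ _ ↦ rfl, blockSide]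
  have hratio := p.ratio_pos 0 (n + 1)
  constructor
  · linarith [mul_nonneg hratio.le hx0, p.offset_mono (ω.digits k) n.zero_le n.le_succ]
  · linarith [mul_le_of_le_one_right hratio.le hx1,
      p.offset_succ_add_ratio_succ_le (ω.digits k) n.zero_le]

variable {d n}

lemma dimH_limitSet_toNCIFS_le {t C : ℝ} (ht : 0 ≤ t)
    (h : ∃ᶠ n in atTop, (p.cellCount n : ℝ) ^ d * p.blockSide n ^ t ≤ C) :
    dimH (p.toNCIFS d).limitSet ≤ ENNReal.ofReal t := by
  refine dimH_le_of_frequently_card_mul_rpow_le (C := ENNReal.ofReal (√d ^ t * C)) ht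
    ENNReal.ofReal_ne_top (r := fun n ↦ ENNReal.ofReal (√d * p.blockSide n)) ?_
    (p.limitSet_toNCIFS_subset_iUnion_block d) (fun _ ↦ ediam_block_le) (h.mono fun n hn ↦ ?_)
  · simpa using ENNReal.tendsto_ofReal (p.tendsto_blockSide.const_mul √d)
  · have hside := (p.blockSide_pos n).le
    rw [card_word, ENNReal.ofReal_rpow_of_nonneg (by positivity) ht, ← ENNReal.ofReal_natCast,
      ← ENNReal.ofReal_mul (by positivity)]
    refine ENNReal.ofReal_le_ofReal ?_
    calc ((p.cellCount n ^ d : ℕ) : ℝ) * (√d * p.blockSide n) ^ t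
        = √d ^ t * ((p.cellCount n : ℝ) ^ d * p.blockSide n ^ t) := by
          rw [Real.mul_rpow (Real.sqrt_nonneg _) hside]; push_cast; ring
      _ ≤ √d ^ t * C := by gcongr

end UpperBound

section Code

variable {p}

/-- One coordinate of the point of the limit set whose positions along that axis are `e`. -/
def code (e : p.Digits) : ℝ := ∑' j, p.ratio 0 (j + 1) * (e j : ℕ)

lemma offset_zero_eq_sum_range (e : p.Digits) (n : ℕ) :
    p.offset e 0 n = ∑ j ∈ Finset.range n, p.ratio 0 (j + 1) * (e j : ℕ) := by
  rw [offset, Finset.range_eq_Ico]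

lemma offset_le_code (e : p.Digits) (n : ℕ) : p.offset e 0 n ≤ code e := by
  have hnonneg (j : ℕ) : 0 ≤ p.ratio 0 (j + 1) * (e j : ℕ) :=
    mul_nonneg (p.ratio_pos _ _).le (Nat.cast_nonneg _)
  have hsummable : Summable fun j ↦ p.ratio 0 (j + 1) * ((e j : ℕ) : ℝ) :=
    summable_of_sum_range_le hnonneg fun n ↦
      (offset_zero_eq_sum_range e n).symm.trans_le (p.offset_le_η e 0 n)
  rw [offset_zero_eq_sum_range]
  exact hsummable.sum_le_tsum _ fun j _ ↦ hnonneg j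

lemma code_le_offset_add (e : p.Digits) (n : ℕ) :
    code e ≤ p.offset e 0 n + p.ratio 0 n * p.η := by
  refine Real.tsum_le_of_sum_range_le
    (fun j ↦ mul_nonneg (p.ratio_pos _ _).le (Nat.cast_nonneg _)) fun l ↦ ?_
  rw [← offset_zero_eq_sum_range]
  have hratio := (p.ratio_pos 0 n).le
  rcases le_total l n with hln | hnl
  · exact (p.offset_mono e l.zero_le hln).trans
      (le_add_of_nonneg_right (mul_nonneg hratio p.η_pos.le))
  · rw [p.offset_eq_offset_add_ratio_mul_offset e n.zero_le hnl]
    gcongr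
    exact p.offset_le_η e n l

lemma le_code_sub_code {e e' : p.Digits} {j : ℕ} (heq : ∀ l < j, e l = e' l) (hlt : e j < e' j) :
    (1 - p.η) * (p.ratio 0 (j + 1) * ((e' j : ℕ) - (e j : ℕ))) ≤ code e' - code e := by
  have hlower := offset_le_code e' (j + 1)
  have hupper := code_le_offset_add e (j + 1)
  rw [p.offset_succ _ j.zero_le] at hlower hupper
  rw [offset_congr fun l hl ↦ heq l (Finset.mem_Ico.1 hl).2] at hupper
  have hgap : (1 : ℝ) ≤ (e' j : ℕ) - (e j : ℕ) := by
    rw [le_sub_iff_add_le']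
    exact_mod_cast hlt
  have htail := le_mul_of_one_le_right (mul_pos (p.ratio_pos 0 (j + 1)) p.η_pos).le hgap
  linarith

lemma toLp_code_mem_limitSet {d : ℕ} (e : Fin d → p.Digits) :
    WithLp.toLp 2 (fun k ↦ code (e k)) ∈ (p.toNCIFS d).limitSet := by
  refine mem_iInter.2 fun n ↦ mem_iUnion.2 ⟨fun j k ↦ e k j,
    WithLp.toLp 2 fun k ↦ (code (e k) - p.offset (e k) 0 n) / p.ratio 0 n, fun k ↦ ?_, ?_⟩
  · have hratio := p.ratio_pos 0 n
    have hupper := code_le_offset_add (e k) n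
    refine ⟨div_nonneg (sub_nonneg.2 (offset_le_code (e k) n)) hratio.le, ?_⟩
    rw [PiLp.toLp_apply, div_le_one hratio]
    linarith [mul_le_of_le_one_right hratio.le p.η_lt_one.le]
  · ext k
    change cellMap (p := p) (fun j k ↦ e k j) _ k = _
    rw [cellMap_apply, offset_congr fun j hj ↦ Word.digits_of_mem (p := p) _ k hj,
      mul_div_cancel₀ _ (p.ratio_pos 0 n).ne', sub_add_cancel]

end Code

section Digits

/-- The index of the interval of length `1 / cellCount n` that contains `y`. -/
def cellIndex (y : ℝ) (n : ℕ) : ℕ := ⌊y * p.cellCount n⌋₊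

/-- The expansion of `y ∈ [0, 1)` in the mixed radix `p.m 0, p.m 1, …`. -/
def digit (y : ℝ) : p.Digits := fun j ↦ ⟨p.cellIndex y (j + 1) % p.m j, Nat.mod_lt _ (p.m_pos j)⟩

lemma cellIndex_succ (y : ℝ) (j : ℕ) :
    p.cellIndex y (j + 1) = p.m j * p.cellIndex y j + p.digit y j := by
  have hdiv : p.cellIndex y j = p.cellIndex y (j + 1) / p.m j := by
    have hm : (p.m j : ℝ) ≠ 0 := by exact_mod_cast (p.m_pos j).ne'
    rw [cellIndex, cellIndex, ← Nat.floor_div_natCast, cellCount_succ, Nat.cast_mul, ← mul_assoc,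
      mul_div_cancel_right₀ _ hm]
  rw [hdiv]
  exact (Nat.div_add_mod _ _).symm

lemma cellIndex_zero {y : ℝ} (hy : y < 1) : p.cellIndex y 0 = 0 := by
  simp [cellIndex, cellCount, hy]

lemma sub_mul_cellCount_lt {y : ℝ} (hy : 0 ≤ y) (y' : ℝ) (n : ℕ) :
    (y' - y) * p.cellCount n < p.cellIndex y' n - p.cellIndex y n + 1 := by
  have hfloor' : y' * p.cellCount n < p.cellIndex y' n + 1 := Nat.lt_floor_add_one _
  have hfloor : (p.cellIndex y n : ℝ) ≤ y * p.cellCount n := Nat.floor_le (by positivity)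
  linarith

variable {p} {y y' : ℝ}

lemma exists_cellIndex_ne (hcount : Tendsto p.cellCount atTop atTop) (hy : 0 ≤ y) (hlt : y < y') :
    ∃ n, p.cellIndex y n ≠ p.cellIndex y' n := by
  have hgap : 0 < y' - y := sub_pos.2 hlt
  obtain ⟨n, hn⟩ := ((tendsto_natCast_atTop_atTop.comp hcount).eventually_gt_atTop
    (1 / (y' - y))).exists
  refine ⟨n, fun heq ↦ ?_⟩
  have hupper := p.sub_mul_cellCount_lt hy y' n
  rw [heq, sub_self, zero_add, mul_comm] at hupper
  exact hupper.not_ge ((div_lt_iff₀ hgap).1 hn).le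

lemma exists_first_digit_lt (hcount : Tendsto p.cellCount atTop atTop) (hy : y ∈ Ico (0 : ℝ) 1)
    (hy' : y' ∈ Ico (0 : ℝ) 1) (hlt : y < y') :
    ∃ j, (∀ l < j, p.digit y l = p.digit y' l) ∧ p.digit y j < p.digit y' j ∧
      p.cellIndex y j = p.cellIndex y' j := by
  classical
  have hex := exists_cellIndex_ne hcount hy.1 hlt
  obtain ⟨j, hj⟩ : ∃ j, Nat.find hex = j + 1 := Nat.exists_eq_succ_of_ne_zero fun h0 ↦ by
    simpa [h0, p.cellIndex_zero hy.2, p.cellIndex_zero hy'.2] using Nat.find_spec hex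
  have heq : ∀ l ≤ j, p.cellIndex y l = p.cellIndex y' l := fun l hl ↦
    not_not.1 (Nat.find_min hex (by omega))
  have hindex : p.cellIndex y (j + 1) < p.cellIndex y' (j + 1) :=
    lt_of_le_of_ne (Nat.floor_le_floor (by gcongr)) (hj ▸ Nat.find_spec hex)
  refine ⟨j, fun l hl ↦ Fin.ext ?_, ?_, heq j le_rfl⟩
  · simp only [digit, heq (l + 1) hl]
  · rw [p.cellIndex_succ, p.cellIndex_succ, heq j le_rfl] at hindex
    exact Nat.lt_of_add_lt_add_left hindex

lemma sub_le_of_digit_lt {j : ℕ} (hy : 0 ≤ y) (heq : p.cellIndex y j = p.cellIndex y' j)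
    (hlt : p.digit y j < p.digit y' j) :
    y' - y ≤ 2 * (((p.digit y' j : ℕ) - (p.digit y j : ℕ)) / p.cellCount (j + 1)) := by
  have hcount : (0 : ℝ) < p.cellCount (j + 1) := by exact_mod_cast p.cellCount_pos (j + 1)
  have hgap : (1 : ℝ) ≤ (p.digit y' j : ℕ) - (p.digit y j : ℕ) := by
    rw [le_sub_iff_add_le']
    exact_mod_cast hlt
  have hsub := p.sub_mul_cellCount_lt hy y' (j + 1)
  rw [p.cellIndex_succ, p.cellIndex_succ, heq] at hsub
  push_cast at hsub
  rw [← mul_div_assoc, le_div_iff₀ hcount]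
  linarith

end Digits

section LowerBound

variable {p} {α C : ℝ}

-- Raising `v / m ≤ 1` to the power `α ≤ 1` only increases it, so a bound for whole blocks also
-- controls the positions inside a block.
lemma div_cellCount_succ_le {j : ℕ} {v : ℝ} (hα1 : α ≤ 1) (hv : 0 ≤ v) (hvm : v ≤ p.m j)
    (h : 1 / (p.cellCount j : ℝ) ≤ C * p.blockSide j ^ α) :
    v / p.cellCount (j + 1) ≤ C * (p.ratio 0 (j + 1) * v) ^ α := by
  have hm : (0 : ℝ) < p.m j := by exact_mod_cast p.m_pos j
  have hside := p.blockSide_pos j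
  have hfraction : v / p.m j ≤ (v / p.m j) ^ α :=
    Real.self_le_rpow_of_le_one (by positivity) ((div_le_one hm).2 hvm) hα1
  calc v / p.cellCount (j + 1)
      = v / p.m j * (1 / p.cellCount j) := by rw [cellCount_succ, Nat.cast_mul]; field_simp
    _ ≤ (v / p.m j) ^ α * (C * p.blockSide j ^ α) := by gcongr
    _ = C * (v / p.m j * p.blockSide j) ^ α := by
        rw [Real.mul_rpow (by positivity) hside.le]; ring
    _ = C * (p.ratio 0 (j + 1) * v) ^ α := by
        rw [blockSide, p.ratio_succ j.zero_le]
        congr 2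
        field_simp

lemma abs_sub_le_mul_abs_code_sub_rpow (hcount : Tendsto p.cellCount atTop atTop) (hα : 0 < α)
    (hα1 : α ≤ 1) (hC : 0 ≤ C)
    (h : ∀ j, 1 < p.m j → 1 / (p.cellCount j : ℝ) ≤ C * p.blockSide j ^ α) {y y' : ℝ}
    (hy : y ∈ Ico (0 : ℝ) 1) (hy' : y' ∈ Ico (0 : ℝ) 1) :
    |y' - y| ≤ 2 * C / (1 - p.η) ^ α * |code (p.digit y') - code (p.digit y)| ^ α := by
  wlog hlt : y < y' generalizing y y'
  · rcases (not_lt.1 hlt).lt_or_eq with hgt | rfl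
    · simpa only [abs_sub_comm] using this hy' hy hgt
    · simp [Real.zero_rpow hα.ne']
  obtain ⟨j, heq, hdigit, hindex⟩ := exists_first_digit_lt hcount hy hy' hlt
  set v : ℝ := (p.digit y' j : ℕ) - (p.digit y j : ℕ)
  have hv_pos : 0 < v := sub_pos.2 (by exact_mod_cast hdigit)
  have hv_le : v ≤ p.m j := (sub_le_self _ (Nat.cast_nonneg _)).trans
    (by exact_mod_cast (p.digit y' j).isLt.le)
  have hm_gt : 1 < p.m j :=
    (Nat.succ_le_of_lt (Nat.zero_le _ |>.trans_lt hdigit)).trans_lt (p.digit y' j).isLt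
  have hη : 0 < 1 - p.η := sub_pos.2 p.η_lt_one
  have hratio := p.ratio_pos 0 (j + 1)
  rw [abs_of_pos (sub_pos.2 hlt)]
  calc y' - y ≤ 2 * (v / p.cellCount (j + 1)) := sub_le_of_digit_lt hy.1 hindex hdigit
    _ ≤ 2 * (C * (p.ratio 0 (j + 1) * v) ^ α) := by
        gcongr
        exact div_cellCount_succ_le hα1 hv_pos.le hv_le (h j hm_gt)
    _ = 2 * C / (1 - p.η) ^ α * ((1 - p.η) * (p.ratio 0 (j + 1) * v)) ^ α := by
        rw [Real.mul_rpow hη.le (by positivity)]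
        have := (Real.rpow_pos_of_pos hη α).ne'
        field_simp
    _ ≤ 2 * C / (1 - p.η) ^ α * |code (p.digit y') - code (p.digit y)| ^ α := by
        gcongr
        exact (le_code_sub_code heq hdigit).trans (le_abs_self _)

variable (p) in
/-- The coding map from the unit cube to the limit set: it reinterprets the mixed-radix digits of
each coordinate at the scales of `p`. -/
def codePoint {d : ℕ} (y : EuclideanSpace ℝ (Fin d)) : EuclideanSpace ℝ (Fin d) :=
  WithLp.toLp 2 fun k ↦ code (p.digit (y k))

lemma dist_le_mul_dist_codePoint_rpow {d : ℕ} (hcount : Tendsto p.cellCount atTop atTop)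
    (hα : 0 < α) (hα1 : α ≤ 1) (hC : 0 ≤ C)
    (h : ∀ j, 1 < p.m j → 1 / (p.cellCount j : ℝ) ≤ C * p.blockSide j ^ α)
    {y y' : EuclideanSpace ℝ (Fin d)} (hy : y ∈ interior (unitCube d))
    (hy' : y' ∈ interior (unitCube d)) :
    dist y y' ≤ √d * (2 * C / (1 - p.η) ^ α) * dist (p.codePoint y) (p.codePoint y') ^ α := by
  rw [interior_unitCube] at hy hy'
  have hη : 0 < 1 - p.η := sub_pos.2 p.η_lt_one
  have hdist := dist_le_sqrt_mul_of_forall_abs_sub_le (x := y) (y := y')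
    (r := 2 * C / (1 - p.η) ^ α * dist (p.codePoint y) (p.codePoint y') ^ α) (by positivity)
    fun k ↦ (abs_sub_le_mul_abs_code_sub_rpow hcount hα hα1 hC h (Ioo_subset_Ico_self (hy' k))
      (Ioo_subset_Ico_self (hy k))).trans (by
        gcongr
        simpa [dist_eq_norm, codePoint] using
          PiLp.norm_apply_le (p.codePoint y - p.codePoint y') k)
  rwa [Fintype.card_fin, ← mul_assoc] at hdist

lemma le_dimH_limitSet_toNCIFS (d : ℕ) (hcount : Tendsto p.cellCount atTop atTop) (hα : 0 < α)
    (hα1 : α ≤ 1) (hC : 0 ≤ C)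
    (h : ∀ j, 1 < p.m j → 1 / (p.cellCount j : ℝ) ≤ C * p.blockSide j ^ α) :
    ENNReal.ofReal (α * d) ≤ dimH (p.toNCIFS d).limitSet := by
  have hη : 0 < 1 - p.η := sub_pos.2 p.η_lt_one
  set D : ℝ := √d * (2 * C / (1 - p.η) ^ α)
  have hD : 0 ≤ D := by positivity
  have hdim_cube : dimH (interior (unitCube d)) = d := by
    rw [Real.dimH_of_nonempty_interior (by simpa using nonempty_interior_unitCube d)]
    simp
  have hdim_image : α.toNNReal * dimH (interior (unitCube d)) ≤
      dimH (p.codePoint '' interior (unitCube d)) := by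
    refine mul_dimH_le_dimH_image_of_edist_le_rpow (C := D.toNNReal) (Real.toNNReal_pos.2 hα)
      fun y hy y' hy' ↦ ?_
    rw [edist_dist, edist_dist, Real.coe_toNNReal α hα.le,
      ENNReal.ofReal_rpow_of_nonneg dist_nonneg hα.le]
    change _ ≤ ENNReal.ofReal D * _
    rw [← ENNReal.ofReal_mul hD]
    exact ENNReal.ofReal_le_ofReal
      (dist_le_mul_dist_codePoint_rpow hcount hα hα1 hC h hy hy')
  calc ENNReal.ofReal (α * d)
      = α.toNNReal * dimH (interior (unitCube d)) := by
        rw [hdim_cube, ENNReal.ofReal_mul hα.le, ENNReal.ofReal_natCast]; rfl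
    _ ≤ dimH (p.codePoint '' interior (unitCube d)) := hdim_image
    _ ≤ dimH (p.toNCIFS d).limitSet :=
        dimH_mono (image_subset_iff.2 fun y _ ↦ toLp_code_mem_limitSet fun k ↦ p.digit (y k))

end LowerBound

section Bursts

/-- The corner grid that subdivides each axis into `2 ^ a j` parts at level `j`, with ratio
`2 ^ (-(δ + β * a j))`. The factor `2 ^ (-δ)` is paid at every level, while a burst `a j ≠ 0` of
subdivision costs an additional factor `2 ^ (-β * a j)`. -/
def ofBursts (a : ℕ → ℕ) {δ β : ℝ} (hδ : 0 < δ) (hβ : 1 ≤ β) : CornerGrid where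
  m j := 2 ^ a j
  c j := 2 ^ (-(δ + β * a j))
  η := 2 ^ (-δ)
  m_pos _ := by positivity
  c_pos _ := by positivity
  c_mul_m_le j := by
    rw [Nat.cast_pow, Nat.cast_ofNat, ← Real.rpow_natCast, ← Real.rpow_add two_pos]
    refine Real.rpow_le_rpow_of_exponent_le one_le_two ?_
    linarith [le_mul_of_one_le_left (a j).cast_nonneg hβ]
  η_lt_one := Real.rpow_lt_one_of_one_lt_of_neg one_lt_two (neg_lt_zero.2 hδ)

/-- The number of times that each axis has been bisected before level `n`. -/
def bisections (a : ℕ → ℕ) (n : ℕ) : ℕ := ∑ j ∈ Finset.range n, a j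

lemma tendsto_bisections_atTop {a : ℕ → ℕ} (ha : ∃ᶠ n in atTop, a n ≠ 0) :
    Tendsto (bisections a) atTop atTop := by
  refine tendsto_atTop_atTop_of_monotone
    (fun _ _ h ↦ Finset.sum_le_sum_of_subset (Finset.range_mono h)) fun b ↦ ?_
  induction b with
  | zero => exact ⟨0, Nat.zero_le _⟩
  | succ b ih =>
    obtain ⟨n, hn⟩ := ih
    obtain ⟨k, hnk, hk⟩ := frequently_atTop.1 ha n
    refine ⟨k + 1, ?_⟩
    calc b + 1 ≤ bisections a n + 1 := by gcongr
      _ ≤ bisections a k + a k := add_le_add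
          (Finset.sum_le_sum_of_subset (Finset.range_mono hnk)) (Nat.one_le_iff_ne_zero.2 hk)
      _ = bisections a (k + 1) := (Finset.sum_range_succ _ _).symm

variable {a : ℕ → ℕ} {δ β : ℝ} (hδ : 0 < δ) (hβ : 1 ≤ β)

lemma cellCount_ofBursts (n : ℕ) : (ofBursts a hδ hβ).cellCount n = 2 ^ bisections a n :=
  Finset.prod_pow_eq_pow_sum _ _ _

lemma ratio_ofBursts (n : ℕ) :
    (ofBursts a hδ hβ).ratio 0 n = 2 ^ (-(δ * n + β * bisections a n)) := by
  rw [ratio, ← Finset.range_eq_Ico, bisections, Nat.cast_sum, Finset.mul_sum]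
  change ∏ j ∈ Finset.range n, (2 : ℝ) ^ (-(δ + β * a j)) = _
  rw [← Real.rpow_sum_of_pos two_pos, Finset.sum_neg_distrib, Finset.sum_add_distrib,
    Finset.sum_const, Finset.card_range, nsmul_eq_mul, mul_comm δ]

lemma blockSide_ofBursts (n : ℕ) : (ofBursts a hδ hβ).blockSide n =
    2 ^ (-(δ * (n + 1) + β * bisections a n + (β - 1) * a n)) := by
  rw [blockSide, ratio_ofBursts]
  change _ * ((2 : ℝ) ^ (-(δ + β * a n)) * (2 ^ a n : ℕ)) = _
  rw [Nat.cast_pow, Nat.cast_ofNat, ← Real.rpow_natCast, ← Real.rpow_add two_pos,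
    ← Real.rpow_add two_pos]
  congr 1
  ring

lemma dimH_limitSet_ofBursts (d : ℕ) {D E : ℝ} (ha : ∃ᶠ n in atTop, a n ≠ 0) (hD : 1 ≤ D)
    (h : ∀ n, a n ≠ 0 →
      δ * (n + 1) + β * bisections a n + (β - 1) * a n = D * bisections a n + E) :
    dimH ((ofBursts a hδ hβ).toNCIFS d).limitSet = ENNReal.ofReal (d / D) := by
  have hD_pos : 0 < D := one_pos.trans_le hD
  have hside {n : ℕ} (hn : a n ≠ 0) :
      (ofBursts a hδ hβ).blockSide n = 2 ^ (-(D * bisections a n + E)) := by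
    rw [blockSide_ofBursts, h n hn]
  apply le_antisymm
  · refine dimH_limitSet_toNCIFS_le (C := 2 ^ (-(E * (d / D)))) _ (by positivity)
      (ha.mono fun n hn ↦ le_of_eq ?_)
    rw [hside hn, cellCount_ofBursts, Nat.cast_pow, Nat.cast_ofNat, ← pow_mul,
      ← Real.rpow_natCast, ← Real.rpow_mul two_pos.le, ← Real.rpow_add two_pos]
    congr 1
    push_cast
    field_simp
    ring
  · have hcount : Tendsto (ofBursts a hδ hβ).cellCount atTop atTop := by
      simp only [funext (cellCount_ofBursts hδ hβ)]
      exact (tendsto_pow_atTop_atTop_of_one_lt one_lt_two).comp (tendsto_bisections_atTop ha)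
    rw [← one_div_mul_eq_div]
    refine le_dimH_limitSet_toNCIFS (C := 2 ^ (E / D)) d hcount (by positivity)
      ((div_le_one hD_pos).2 hD) (by positivity) fun n hn ↦ le_of_eq ?_
    have hn_ne : a n ≠ 0 := Nat.one_lt_two_pow_iff.1 hn
    rw [hside hn_ne, cellCount_ofBursts, Nat.cast_pow, Nat.cast_ofNat, one_div,
      ← Real.rpow_natCast, ← Real.rpow_neg two_pos.le, ← Real.rpow_mul two_pos.le,
      ← Real.rpow_add two_pos]
    congr 1
    field_simp
    ring

lemma log_Z_ofBursts_mul_inv (d n : ℕ) (t : ℝ) :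
    (((ofBursts a hδ hβ).toNCIFS d).Z n t).log * (((n : ℝ)⁻¹ : ℝ) : EReal) =
      (((d - t * β) * bisections a n - t * δ * n) / n * Real.log 2 : ℝ) := by
  rw [Z_toNCIFS, ENNReal.log_ofReal_of_pos
    (by have := (ofBursts a hδ hβ).ratio_pos 0 n
        have := (ofBursts a hδ hβ).cellCount_pos n
        positivity),
    cellCount_ofBursts, ratio_ofBursts, Nat.cast_pow, Nat.cast_ofNat, ← pow_mul,
    ← Real.rpow_natCast, ← Real.rpow_mul two_pos.le, ← Real.rpow_add two_pos,
    Real.log_rpow two_pos, ← EReal.coe_mul]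
  congr 1
  push_cast
  ring

section Pressure

variable {d P : ℕ} {t : ℝ}

lemma lowP_ofBursts_pos (hP : 0 < P) (hle : ∀ n, n ≤ P * (bisections a n + 1)) (ht : 0 ≤ t)
    (htd : t * (δ * P + β) < d) : 0 < ((ofBursts a hδ hβ).toNCIFS d).lowP t := by
  have hP' : (0 : ℝ) < P := by exact_mod_cast hP
  have htβ : 0 ≤ d - t * β := by linarith [mul_nonneg ht (mul_nonneg hδ.le hP'.le)]
  set s : ℝ := (d - t * β) / P - t * δ
  have hs : 0 < s := by
    rw [sub_pos, lt_div_iff₀ hP']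
    linarith
  have hlower {n : ℕ} (hn : 0 < n) :
      s - (d - t * β) / n ≤ ((d - t * β) * bisections a n - t * δ * n) / n := by
    have : (0 : ℝ) < n := by exact_mod_cast hn
    have hbisections : (n : ℝ) / P - 1 ≤ bisections a n := by
      rw [sub_le_iff_le_add, div_le_iff₀' hP']
      exact_mod_cast hle n
    calc s - (d - t * β) / n
        = ((d - t * β) * (n / P - 1) - t * δ * n) / n := by simp only [s]; field_simp; ring
      _ ≤ ((d - t * β) * bisections a n - t * δ * n) / n := by gcongr
  have hlim : Tendsto (fun n : ℕ ↦ (((s - (d - t * β) / n) * Real.log 2 : ℝ) : EReal)) atTop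
      (𝓝 ((s * Real.log 2 : ℝ) : EReal)) := by
    refine EReal.tendsto_coe.2 (Tendsto.mul_const _ ?_)
    simpa using tendsto_const_nhds.sub (tendsto_const_div_atTop_nhds_zero_nat (d - t * β))
  calc (0 : EReal) < (s * Real.log 2 : ℝ) := by
        exact_mod_cast mul_pos hs (Real.log_pos one_lt_two)
    _ = liminf (fun n : ℕ ↦ (((s - (d - t * β) / n) * Real.log 2 : ℝ) : EReal)) atTop :=
        hlim.liminf_eq.symm
    _ ≤ ((ofBursts a hδ hβ).toNCIFS d).lowP t := by
        refine liminf_le_liminf ((eventually_gt_atTop 0).mono fun n hn ↦ ?_)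
        rw [log_Z_ofBursts_mul_inv, EReal.coe_le_coe_iff]
        gcongr
        exact hlower hn

lemma lowP_ofBursts_nonpos (hfreq : ∃ᶠ n in atTop, P * (bisections a n + 1) = n) (ht : 0 ≤ t)
    (htd : d ≤ t * (δ * P + β)) : ((ofBursts a hδ hβ).toNCIFS d).lowP t ≤ 0 := by
  refine liminf_le_of_frequently_le' (hfreq.mono fun n hn ↦ ?_)
  have hn' : (n : ℝ) = P * (bisections a n + 1) := by exact_mod_cast hn.symm
  have hnumerator : (d - t * β) * bisections a n - t * δ * n ≤ 0 :=
    calc (d - t * β) * bisections a n - t * δ * n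
        = -((t * (δ * P + β) - d) * bisections a n + t * δ * P) := by rw [hn']; ring
      _ ≤ 0 := neg_nonpos.2
          (add_nonneg (mul_nonneg (sub_nonneg.2 htd) (Nat.cast_nonneg _)) (by positivity))
  rw [log_Z_ofBursts_mul_inv, ← EReal.coe_zero, EReal.coe_le_coe_iff]
  exact mul_nonpos_of_nonpos_of_nonneg
    (div_nonpos_of_nonpos_of_nonneg hnumerator (Nat.cast_nonneg _)) (Real.log_nonneg one_le_two)

lemma Bdim_ofBursts (d : ℕ) (hP : 0 < P) (hle : ∀ n, n ≤ P * (bisections a n + 1))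
    (hfreq : ∃ᶠ n in atTop, P * (bisections a n + 1) = n) :
    ((ofBursts a hδ hβ).toNCIFS d).Bdim = ENNReal.ofReal (d / (δ * P + β)) := by
  have hpos : 0 < δ * P + β := add_pos_of_nonneg_of_pos (by positivity) (one_pos.trans_le hβ)
  refine NCIFS.Bdim_eq_ofReal _ (fun t ht htd ↦ ?_) fun t htd ↦ ?_
  · exact lowP_ofBursts_pos hδ hβ hP hle ht ((lt_div_iff₀ hpos).1 htd)
  · exact lowP_ofBursts_nonpos hδ hβ hfreq
      ((div_nonneg (Nat.cast_nonneg d) hpos.le).trans htd.le) ((div_lt_iff₀ hpos).1 htd).le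

end Pressure

end Bursts

section GeometricBursts

/-- The least `k` with `n ≤ P * (r + 1) ^ k`. -/
def stage (r P n : ℕ) : ℕ := Nat.clog (r + 1) (n ⌈/⌉ P)

/-- The sequence that vanishes except at the levels `n = P * (r + 1) ^ k`, where it multiplies
`bisections + 1` by `r + 1`. -/
def burst (r P n : ℕ) : ℕ := (r + 1) ^ stage r P (n + 1) - (r + 1) ^ stage r P n

variable {r P n : ℕ}

lemma stage_le_iff (hr : 0 < r) (hP : 0 < P) {k : ℕ} :
    stage r P n ≤ k ↔ n ≤ P * (r + 1) ^ k := by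
  rw [stage, Nat.clog_le_iff_le_pow (Nat.lt_add_of_pos_left hr), ceilDiv_le_iff_le_mul hP]

lemma le_mul_pow_stage (hr : 0 < r) (hP : 0 < P) (n : ℕ) : n ≤ P * (r + 1) ^ stage r P n :=
  (stage_le_iff hr hP).1 le_rfl

lemma monotone_stage (hr : 0 < r) (hP : 0 < P) : Monotone (stage r P) := fun _ l h ↦
  (stage_le_iff hr hP).2 (h.trans (le_mul_pow_stage hr hP l))

lemma bisections_burst_add_one (hr : 0 < r) (hP : 0 < P) (n : ℕ) :
    bisections (burst r P) n + 1 = (r + 1) ^ stage r P n := by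
  have hmono : Monotone fun n ↦ (r + 1) ^ stage r P n :=
    (pow_right_mono₀ (Nat.le_add_left 1 r)).comp (monotone_stage hr hP)
  have hzero : stage r P 0 = 0 := Nat.le_zero.1 ((stage_le_iff hr hP).2 (Nat.zero_le _))
  have hsum : bisections (burst r P) n = (r + 1) ^ stage r P n - (r + 1) ^ stage r P 0 :=
    Finset.sum_range_tsub hmono n
  rw [hsum, hzero, pow_zero, Nat.sub_add_cancel (Nat.one_le_pow _ _ r.succ_pos)]

lemma le_mul_bisections_burst_add_one (hr : 0 < r) (hP : 0 < P) (n : ℕ) :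
    n ≤ P * (bisections (burst r P) n + 1) := by
  rw [bisections_burst_add_one hr hP]
  exact le_mul_pow_stage hr hP n

lemma burst_ne_zero_iff (hr : 0 < r) :
    burst r P n ≠ 0 ↔ stage r P n < stage r P (n + 1) := by
  rw [burst, Nat.sub_ne_zero_iff_lt, Nat.pow_lt_pow_iff_right (Nat.lt_add_of_pos_left hr)]

lemma mul_bisections_add_one_eq_of_burst_ne_zero (hr : 0 < r) (hP : 0 < P)
    (hn : burst r P n ≠ 0) : P * (bisections (burst r P) n + 1) = n := by
  refine le_antisymm ?_ (le_mul_bisections_burst_add_one hr hP n)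
  have hlt := (burst_ne_zero_iff hr).1 hn
  rw [← not_le, stage_le_iff hr hP, not_le, Nat.lt_succ_iff] at hlt
  rwa [bisections_burst_add_one hr hP]

lemma burst_eq_of_ne_zero (hr : 0 < r) (hP : 0 < P) (hn : burst r P n ≠ 0) :
    burst r P n = r * (bisections (burst r P) n + 1) := by
  have hlevel := mul_bisections_add_one_eq_of_burst_ne_zero hr hP hn
  rw [bisections_burst_add_one hr hP] at hlevel ⊢
  have hstage : stage r P (n + 1) = stage r P n + 1 := by
    refine le_antisymm ((stage_le_iff hr hP).2 ?_) ((burst_ne_zero_iff hr).1 hn)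
    rw [pow_succ, ← mul_assoc, hlevel, Nat.mul_add_one]
    have : 0 < n := hlevel ▸ by positivity
    have : n ≤ n * r := Nat.le_mul_of_pos_right n hr
    omega
  rw [burst, hstage, pow_succ, Nat.mul_add_one, Nat.add_sub_cancel, mul_comm]

lemma frequently_burst_ne_zero (hr : 0 < r) (hP : 0 < P) : ∃ᶠ n in atTop, burst r P n ≠ 0 := by
  refine frequently_atTop.2 fun i ↦ ⟨P * (r + 1) ^ i, ?_, ?_⟩
  · exact (Nat.lt_pow_self (Nat.lt_add_of_pos_left hr)).le.trans (Nat.le_mul_of_pos_left _ hP)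
  · rw [burst_ne_zero_iff hr]
    refine ((stage_le_iff hr hP).2 le_rfl).trans_lt ?_
    rw [← not_le, stage_le_iff hr hP, not_le]
    exact Nat.lt_succ_self _

variable {δ β : ℝ} (hδ : 0 < δ) (hβ : 1 ≤ β)

lemma dimH_limitSet_ofBursts_burst (d : ℕ) (hr : 0 < r) (hP : 0 < P) :
    dimH ((ofBursts (burst r P) hδ hβ).toNCIFS d).limitSet =
      ENNReal.ofReal (d / (δ * P + β + (β - 1) * r)) := by
  have := sub_nonneg.2 hβ
  refine dimH_limitSet_ofBursts hδ hβ d (E := δ * P + δ + (β - 1) * r)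
    (frequently_burst_ne_zero hr hP) ?_ fun n hn ↦ ?_
  · linarith [show 0 ≤ δ * P + (β - 1) * r by positivity]
  · have hlevel : (P : ℝ) * (bisections (burst r P) n + 1) = n := by
      exact_mod_cast mul_bisections_add_one_eq_of_burst_ne_zero hr hP hn
    have hburst : (burst r P n : ℝ) = r * (bisections (burst r P) n + 1) := by
      exact_mod_cast burst_eq_of_ne_zero hr hP hn
    rw [hburst, ← hlevel]
    ring

lemma Bdim_ofBursts_burst (d : ℕ) (hr : 0 < r) (hP : 0 < P) :
    ((ofBursts (burst r P) hδ hβ).toNCIFS d).Bdim = ENNReal.ofReal (d / (δ * P + β)) :=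
  Bdim_ofBursts hδ hβ d hP (le_mul_bisections_burst_add_one hr hP)
    ((frequently_burst_ne_zero hr hP).mono fun _ ↦
      mul_bisections_add_one_eq_of_burst_ne_zero hr hP)

lemma limsup_log_card_ofBursts_burst_le {d : ℕ} {ε : ℝ} (hr : 0 < r) (hP : 0 < P)
    (hε : 0 ≤ ε) (h : d * Real.log 2 * r ≤ ε * P) :
    limsup (fun n : ℕ ↦ Real.log (Nat.card (((ofBursts (burst r P) hδ hβ).toNCIFS d).I n)) / n)
      atTop ≤ ε := by
  refine limsup_log_card_toNCIFS_I_div_le _ d fun n ↦ ?_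
  change d * Real.log ((2 ^ burst r P n : ℕ) : ℝ) ≤ ε * n
  rw [Nat.cast_pow, Nat.cast_ofNat, Real.log_pow]
  by_cases hn : burst r P n = 0
  · rw [hn, Nat.cast_zero, zero_mul, mul_zero]
    positivity
  · have hlevel : (n : ℝ) = P * (bisections (burst r P) n + 1) := by
      exact_mod_cast (mul_bisections_add_one_eq_of_burst_ne_zero hr hP hn).symm
    calc d * (burst r P n * Real.log 2)
        = d * Real.log 2 * r * (bisections (burst r P) n + 1) := by
          rw [burst_eq_of_ne_zero hr hP hn]; push_cast; ring
      _ ≤ ε * P * (bisections (burst r P) n + 1) := by gcongr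
      _ = ε * n := by rw [hlevel, mul_assoc]

end GeometricBursts

end CornerGrid

lemma exists_burst_parameters {D₁ D₂ : ℝ} (hD₂ : 1 < D₂) (hD : D₂ < D₁) (L : ℝ) {ε : ℝ}
    (hε : 0 < ε) :
    ∃ (r P : ℕ) (δ β : ℝ), 0 < r ∧ 0 < P ∧ 0 < δ ∧ 1 ≤ β ∧
      δ * P + β + (β - 1) * r = D₁ ∧ δ * P + β = D₂ ∧ L * r ≤ ε * P := by
  have hgap : 0 < D₁ - D₂ := sub_pos.2 hD
  have hD₂' : 0 < D₂ - 1 := sub_pos.2 hD₂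
  obtain ⟨r, hr⟩ := exists_nat_gt ((D₁ - D₂) / (D₂ - 1))
  have hr_pos : (0 : ℝ) < r := (div_pos hgap hD₂').trans hr
  obtain ⟨P, hP⟩ := exists_nat_gt (max 0 (L * r / ε))
  have hP_pos : (0 : ℝ) < P := (le_max_left _ _).trans_lt hP
  have hβ : 1 + (D₁ - D₂) / r < D₂ := by
    rw [div_lt_iff₀ hD₂'] at hr
    rw [← lt_sub_iff_add_lt', div_lt_iff₀ hr_pos]
    linarith
  refine ⟨r, P, (D₂ - (1 + (D₁ - D₂) / r)) / P, 1 + (D₁ - D₂) / r, by exact_mod_cast hr_pos,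
    by exact_mod_cast hP_pos, div_pos (sub_pos.2 hβ) hP_pos, ?_, ?_, ?_, ?_⟩
  · exact le_add_of_nonneg_right (div_pos hgap hr_pos).le
  · field_simp
    ring
  · field_simp
    ring
  · exact ((div_lt_iff₀' hε).1 ((le_max_right _ _).trans_lt hP)).le

/-- (Counterexamples to Bowen's formula.) For every `0 < t₁ < t₂ < d` and
`ε > 0` there exists a perfectly balanced finite NCIFS `Φ` in `ℝ^d` (all maps at each level are
affine similarities with the same contraction ratio, and there is no distortion: `K = 1`) with
`limsup (1/n) log #I^{(n)} ≤ ε`, such that `HD(J(Φ)) = t₁` while `B(Φ) = t₂`. -/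
theorem NCIFS.exists_counterexample (d : ℕ) (t₁ t₂ ε : ℝ)
    (h₀ : 0 < t₁) (h₁ : t₁ < t₂) (h₂ : t₂ < d) (hε : 0 < ε) :
    ∃ Φ : NCIFS d, (∀ n, Finite (Φ.I n)) ∧ Φ.K = 1 ∧
      (∀ n (a b : Φ.I n), Φ.Dnorm n a = Φ.Dnorm n b) ∧
      (∀ n (i : Φ.I n), ∀ x ∈ Φ.X, ∀ y ∈ Φ.X,
        dist (Φ.wMap n (n+1) (Φ.single n i) x) (Φ.wMap n (n+1) (Φ.single n i) y) =
          Φ.Dnorm n i * dist x y) ∧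
      limsup (fun n : ℕ => Real.log (Nat.card (Φ.I n)) / n) atTop ≤ ε ∧
      dimH Φ.limitSet = ENNReal.ofReal t₁ ∧
      Φ.Bdim = ENNReal.ofReal t₂ := by
  have ht₂ : 0 < t₂ := h₀.trans h₁
  have hd : (0 : ℝ) < d := ht₂.trans h₂
  obtain ⟨r, P, δ, β, hr, hP, hδ, hβ, hD₁, hD₂, hgrowth⟩ := exists_burst_parameters
    ((one_lt_div ht₂).2 h₂) (div_lt_div_of_pos_left hd h₀ h₁) (d * Real.log 2) hε
  refine ⟨(CornerGrid.ofBursts (CornerGrid.burst r P) hδ hβ).toNCIFS d,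
    CornerGrid.finite_toNCIFS_I _ d, rfl, fun _ _ _ ↦ rfl,
    fun _ _ _ _ _ _ ↦ CornerGrid.dist_cellMap _ _ _,
    CornerGrid.limsup_log_card_ofBursts_burst_le hδ hβ hr hP hε.le hgrowth, ?_, ?_⟩
  · rw [CornerGrid.dimH_limitSet_ofBursts_burst hδ hβ d hr hP, hD₁, div_div_cancel₀ hd.ne']
  · rw [CornerGrid.Bdim_ofBursts_burst hδ hβ d hr hP, hD₂, div_div_cancel₀ hd.ne']
end
end
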